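/- For every prime power q with q ≡ 3 (mod 4), |σ(q) − 25·(2⁻¹¹ + 2⁻¹⁶)·q²| < 138·q^{3/2} + 235·q. -/

import Mathlib

open scoped Classical

noncomputable section

/-- The operation of the quasigroup `Q_{a,b}`:
`u*v = u + a(v-u)` if `v-u` is a square, `u*v = u + b(v-u)` otherwise. -/
def qop {F : Type*} [Field F] (a b u v : F) : F :=
  if IsSquare (v - u) then u + a * (v - u) else u + b * (v - u)

/-- The set `Σ(F)` of pairs `(a,b)` with `a ≠ b`, `a,b ∉ {0,1}`, and
`ab` and `(1-a)(1-b)` both squares. -/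
def SigSet (F : Type*) [Field F] : Set (F × F) :=
  {p | p.1 ≠ p.2 ∧ p.1 ≠ 0 ∧ p.1 ≠ 1 ∧ p.2 ≠ 0 ∧ p.2 ≠ 1 ∧
    IsSquare (p.1 * p.2) ∧ IsSquare ((1 - p.1) * (1 - p.2))}

/-- `Q_{a,b}` is maximally nonassociative. -/
def MaxNA {F : Type*} [Field F] (a b : F) : Prop :=
  ∀ u v w : F, qop a b (qop a b u v) w = qop a b u (qop a b v w) → u = v ∧ v = w

/-- `σ(q)`: the number of pairs `(a,b) ∈ Σ` for which `Q_{a,b}` is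
maximally nonassociative. -/
def sigmaCount (F : Type*) [Field F] : ℕ :=
  Set.ncard {p : F × F | p ∈ SigSet F ∧ MaxNA p.1 p.2}

section Stepanov
open Polynomial

lemma add_pow_cardF {F : Type*} [Field F] [Fintype F] (u v : F[X]) :
    (u + v) ^ Fintype.card F = u ^ Fintype.card F + v ^ Fintype.card F := by
  obtain ⟨p, hp, n, hpr, hc⟩ := FiniteField.card' F
  have := Fact.mk hpr
  rw [hc]
  exact add_pow_char_pow u v p n

lemma C_pow_cardF {F : Type*} [Field F] [Fintype F] (c : F) :
    (C c : F[X]) ^ Fintype.card F = C c := by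
  rw [← C_pow, FiniteField.pow_card]

/-- Hasse derivatives of order below `q` ignore factors `X^(jq)`, at points of `F`. -/
lemma hasse_eval_mul_X {F : Type*} [Field F] [Fintype F] (g : F[X]) (j l : ℕ)
    (hl : l < Fintype.card F) (x : F) :
    (hasseDeriv l (g * X ^ (j * Fintype.card F))).eval x = (hasseDeriv l g).eval x * x ^ j := by
  rw [← taylor_coeff, ← taylor_coeff, taylor_mul]
  have h1 : taylor x (X ^ (j * Fintype.card F) : F[X]) = (X ^ Fintype.card F + C x) ^ j := by
    rw [taylor_apply, X_pow_comp, mul_comm, pow_mul, add_pow_cardF, C_pow_cardF]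
  have h2 : (X ^ Fintype.card F : F[X]) ∣ (X ^ Fintype.card F + C x) ^ j - (C x) ^ j := by
    have := sub_dvd_pow_sub_pow (X ^ Fintype.card F + C x : F[X]) (C x) j
    simpa using this
  obtain ⟨t, ht⟩ := h2
  have h3 : (X ^ Fintype.card F + C x : F[X]) ^ j = C (x ^ j) + X ^ Fintype.card F * t := by
    rw [← ht, C_pow]; ring
  rw [h1, h3, mul_add, coeff_add, coeff_mul_C]
  have h4 : (taylor x g * (X ^ Fintype.card F * t)).coeff l = 0 := by
    have : (X ^ Fintype.card F : F[X]) ∣ taylor x g * (X ^ Fintype.card F * t) :=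
      ⟨taylor x g * t, by ring⟩
    exact X_pow_dvd_iff.1 this l hl
  rw [h4, add_zero]

lemma pow_dvd_hasse {F : Type*} [Field F] (f s : F[X]) (n : ℕ) :
    ∀ l : ℕ, f ^ (n - l) ∣ hasseDeriv l (f ^ n * s) := by
  induction n with
  | zero => intro l; simp
  | succ n ih =>
    intro l
    have : f ^ (n + 1) * s = f * (f ^ n * s) := by ring
    rw [this, hasseDeriv_mul]
    refine Finset.dvd_sum ?_
    rintro ⟨i, j⟩ hij
    rw [Finset.HasAntidiagonal.mem_antidiagonal] at hij
    simp only at hij ⊢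
    rcases Nat.eq_zero_or_pos i with h0 | h0
    · subst h0
      have hj : j = l := by omega
      subst hj
      rw [hasseDeriv_zero]
      simp only [LinearMap.id_coe, id_eq]
      refine (pow_dvd_pow f (show n + 1 - j ≤ (n - j) + 1 by omega)).trans ?_
      rw [pow_succ, mul_comm]
      exact mul_dvd_mul_left _ (ih j)
    · refine Dvd.dvd.mul_left ?_ _
      exact (pow_dvd_pow f (show n + 1 - l ≤ n - j by omega)).trans (ih j)

/-- A polynomial divisible by `f^k` of bounded degree lies in the image of `degreeLT`. -/
lemma mem_W {F : Type*} [Field F] (f : F[X]) (hf : f ≠ 0) (k m : ℕ) (g : F[X])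
    (hd : f ^ k ∣ g) (hdeg : g = 0 ∨ g.natDegree < k * f.natDegree + m) :
    g ∈ (degreeLT F m).map (LinearMap.mulLeft F (f ^ k)) := by
  obtain ⟨t, rfl⟩ := hd
  refine ⟨t, ?_, rfl⟩
  rcases eq_or_ne t 0 with h | h
  · subst h; exact Submodule.zero_mem _
  · rcases hdeg with h0 | h0
    · exact absurd h0 (mul_ne_zero (pow_ne_zero _ hf) h)
    · rw [natDegree_mul (pow_ne_zero _ hf) h, natDegree_pow] at h0
      change t ∈ degreeLT F m
      rw [mem_degreeLT, degree_eq_natDegree h]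
      exact_mod_cast (by omega : t.natDegree < m)

lemma natDegree_lt_of_memLT {F : Type*} [Field F] {m : ℕ} {t : F[X]} (ht : t ∈ degreeLT F m) :
    t = 0 ∨ t.natDegree < m := by
  rcases eq_or_ne t 0 with h | h
  · exact Or.inl h
  · right
    rw [mem_degreeLT, degree_eq_natDegree h] at ht
    exact_mod_cast ht

/-- the reduced condition, as a linear map -/
def PhiMap {F : Type*} [Field F] (f : F[X]) (n J B : ℕ) (e : F) (l : ℕ) :
    ((Fin J → degreeLT F B) × (Fin J → degreeLT F B)) →ₗ[F] F[X] :=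
  ∑ j : Fin J, (LinearMap.mulRight F (X ^ (j : ℕ) : F[X])).comp
    (((LinearMap.mulLeft F (f ^ n)).comp ((hasseDeriv l).comp ((Submodule.subtype _).comp
        ((LinearMap.proj j).comp (LinearMap.fst F _ _))))) +
      e • ((hasseDeriv l).comp ((LinearMap.mulLeft F (f ^ n)).comp ((Submodule.subtype _).comp
        ((LinearMap.proj j).comp (LinearMap.snd F _ _))))))

lemma PhiMap_apply {F : Type*} [Field F] (f : F[X]) (n J B : ℕ) (e : F) (l : ℕ)
    (v : (Fin J → degreeLT F B) × (Fin J → degreeLT F B)) :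
    PhiMap f n J B e l v = ∑ j : Fin J, (f ^ n * hasseDeriv l (v.1 j : F[X]) +
      e • hasseDeriv l (f ^ n * (v.2 j : F[X]))) * X ^ (j : ℕ) := by
  simp [PhiMap, LinearMap.sum_apply]

lemma finrank_degLT (F : Type*) [Field F] (m : ℕ) : Module.finrank F (degreeLT F m) = m := by
  rw [(degreeLTEquiv F m).finrank_eq]; simp

instance finite_degLT (F : Type*) [Field F] (m : ℕ) : Module.Finite F (degreeLT F m) :=
  Module.Finite.equiv (degreeLTEquiv F m).symm

lemma PhiMap_mem {F : Type*} [Field F] (f : F[X]) (hf : f ≠ 0) (hd : 1 ≤ f.natDegree)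
    (n J B : ℕ) (e : F) (l : ℕ) (hl : l ≤ n)
    (v : (Fin J → degreeLT F B) × (Fin J → degreeLT F B)) :
    PhiMap f n J B e l v ∈
      (degreeLT F (B + l * (f.natDegree - 1) + J)).map (LinearMap.mulLeft F (f ^ (n - l))) := by
  rw [PhiMap_apply]
  refine Submodule.sum_mem _ fun j _ => ?_
  have hj := j.2
  have key : (n - l) * f.natDegree + (B + l * (f.natDegree - 1) + J) + l
      = n * f.natDegree + B + J := by
    obtain ⟨c, hc⟩ := Nat.exists_eq_add_of_le hl
    obtain ⟨d', hd'⟩ := Nat.exists_eq_add_of_le hd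
    rw [hd']
    subst hc
    simp only [Nat.add_sub_cancel_left]
    ring
  rw [add_mul]
  refine Submodule.add_mem _ ?_ ?_
  · apply mem_W f hf
    · rw [mul_assoc]
      exact Dvd.dvd.mul_right (pow_dvd_pow _ (Nat.sub_le _ _)) _
    · rcases natDegree_lt_of_memLT (v.1 j).2 with h | h
      · left; rw [h]; simp
      · rcases lt_or_ge (v.1 j : F[X]).natDegree l with h1 | h1
        · left; rw [hasseDeriv_eq_zero_of_lt_natDegree _ _ h1]; simp
        · right
          have a1 := natDegree_hasseDeriv_le (v.1 j : F[X]) l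
          have a2 : (f ^ n * hasseDeriv l (v.1 j : F[X]) * X ^ (j : ℕ)).natDegree
              ≤ n * f.natDegree + (hasseDeriv l (v.1 j : F[X])).natDegree + j := by
            refine natDegree_mul_le.trans ?_
            rw [natDegree_X_pow]
            gcongr
            refine natDegree_mul_le.trans ?_
            rw [natDegree_pow]
          omega
  · rw [smul_mul_assoc]
    refine Submodule.smul_mem _ _ ?_
    apply mem_W f hf
    · exact Dvd.dvd.mul_right (pow_dvd_hasse f _ n l) _
    · rcases natDegree_lt_of_memLT (v.2 j).2 with h | h
      · left; rw [h]; simp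
      · have a3 : (f ^ n * (v.2 j : F[X])).natDegree ≤ n * f.natDegree + (v.2 j : F[X]).natDegree := by
          refine natDegree_mul_le.trans ?_
          rw [natDegree_pow]
        rcases lt_or_ge (f ^ n * (v.2 j : F[X])).natDegree l with h1 | h1
        · left; rw [hasseDeriv_eq_zero_of_lt_natDegree _ _ h1]; simp
        · right
          have a1 := natDegree_hasseDeriv_le (f ^ n * (v.2 j : F[X])) l
          have a2 : (hasseDeriv l (f ^ n * (v.2 j : F[X])) * X ^ (j : ℕ)).natDegree
              ≤ (hasseDeriv l (f ^ n * (v.2 j : F[X]))).natDegree + j := by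
            refine natDegree_mul_le.trans ?_
            rw [natDegree_X_pow]
          omega

lemma exists_aux {F : Type*} [Field F] (f : F[X]) (hf : f ≠ 0) (hd : 1 ≤ f.natDegree)
    (n J B M : ℕ) (e : F) (hM : M ≤ n)
    (hcount : ∑ l ∈ Finset.range M, (B + l * (f.natDegree - 1) + J) < 2 * J * B) :
    ∃ v : (Fin J → degreeLT F B) × (Fin J → degreeLT F B), v ≠ 0 ∧
      ∀ l < M, PhiMap f n J B e l v = 0 := by
  let W : Fin M → Submodule F F[X] := fun l =>
    (degreeLT F (B + l * (f.natDegree - 1) + J)).map (LinearMap.mulLeft F (f ^ (n - l)))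
  let T : ((Fin J → degreeLT F B) × (Fin J → degreeLT F B)) →ₗ[F] ((l : Fin M) → W l) :=
    LinearMap.pi fun l => (PhiMap f n J B e l).codRestrict (W l)
      (fun v => PhiMap_mem f hf hd n J B e l (l.2.le.trans hM) v)
  have hker : T.ker ≠ ⊥ := by
    apply LinearMap.ker_ne_bot_of_finrank_lt
    rw [Module.finrank_prod, Module.finrank_pi_fintype, Module.finrank_pi_fintype]
    simp only [finrank_degLT, Finset.sum_const, Finset.card_univ, Fintype.card_fin, smul_eq_mul]
    calc ∑ l : Fin M, Module.finrank F (W l)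
        ≤ ∑ l : Fin M, (B + (l : ℕ) * (f.natDegree - 1) + J) := by
          refine Finset.sum_le_sum fun l _ => ?_
          refine (Submodule.finrank_map_le _ _).trans ?_
          rw [finrank_degLT]
      _ = ∑ l ∈ Finset.range M, (B + l * (f.natDegree - 1) + J) :=
          Fin.sum_univ_eq_sum_range (fun l => B + l * (f.natDegree - 1) + J) M
      _ < _ := by rw [← two_mul, ← mul_assoc]; exact hcount
  obtain ⟨v, hv, hv0⟩ := Submodule.exists_mem_ne_zero_of_ne_bot hker
  refine ⟨v, hv0, fun l hl => ?_⟩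
  have h1 := congrFun (LinearMap.mem_ker.1 hv) ⟨l, hl⟩
  have h2 := congrArg Subtype.val h1
  exact h2

lemma aux_nonzero {F : Type*} [Field F] [Fintype F] (f : F[X]) (n J B : ℕ)
    (hn : Fintype.card F = 2 * n + 1) (h0 : f.eval 0 ≠ 0)
    (hsq : ∀ (r s : F[X]) (c : F), c ≠ 0 → r ^ 2 * f = C c * s ^ 2 → r = 0 ∧ s = 0)
    (hB : 2 * B + f.natDegree ≤ Fintype.card F + 1)
    (v : (Fin J → degreeLT F B) × (Fin J → degreeLT F B)) (hv : v ≠ 0) :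
    ∑ j : Fin J, ((v.1 j : F[X]) + f ^ n * (v.2 j : F[X])) * X ^ ((j : ℕ) * Fintype.card F) ≠ 0 := by
  intro hR
  apply hv
  have key : ∀ k : ℕ, ∀ j : Fin J, (j : ℕ) = k → v.1 j = 0 ∧ v.2 j = 0 := by
    intro k
    induction k using Nat.strong_induction_on with
    | _ k ih =>
    intro j hj
    set q := Fintype.card F with hq
    have hdv : (X ^ ((k + 1) * q) : F[X]) ∣
        ((v.1 j : F[X]) + f ^ n * (v.2 j : F[X])) * X ^ (k * q) := by
      have e1 : ((v.1 j : F[X]) + f ^ n * (v.2 j : F[X])) * X ^ (k * q) =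
          - ∑ i ∈ Finset.univ.erase j,
            ((v.1 i : F[X]) + f ^ n * (v.2 i : F[X])) * X ^ ((i : ℕ) * q) := by
        rw [← Finset.add_sum_erase _ _ (Finset.mem_univ j), hj] at hR
        exact eq_neg_of_add_eq_zero_left hR
      rw [e1, dvd_neg]
      refine Finset.dvd_sum fun i hi => ?_
      have hij : i ≠ j := Finset.ne_of_mem_erase hi
      rcases lt_trichotomy (i : ℕ) k with h | h | h
      · obtain ⟨a, b⟩ := ih i h i rfl
        rw [a, b]; simp
      · exact absurd (Fin.ext (h.trans hj.symm)) hij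
      · exact Dvd.dvd.mul_left (pow_dvd_pow _ (Nat.mul_le_mul_right _ h)) _
    have hdv2 : (X ^ q : F[X]) ∣ (v.1 j : F[X]) + f ^ n * (v.2 j : F[X]) := by
      rw [add_mul, pow_add, one_mul, mul_comm] at hdv
      exact (mul_dvd_mul_iff_right (pow_ne_zero _ X_ne_zero)).1 hdv
    obtain ⟨g, hg⟩ : (X : F[X]) ∣ f - C (f.eval 0) := by
      rw [X_dvd_iff, coeff_sub, coeff_C_zero, coeff_zero_eq_eval_zero, sub_self]
    have hfq : f ^ q = C (f.eval 0) + X ^ q * g ^ q := by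
      have : f = C (f.eval 0) + X * g := by rw [← hg]; ring
      conv_lhs => rw [this]
      rw [add_pow_cardF, C_pow_cardF, mul_pow]
    have hdv3 : (X ^ q : F[X]) ∣
        (v.1 j : F[X]) ^ 2 * f - C (f.eval 0) * (v.2 j : F[X]) ^ 2 := by
      obtain ⟨t, ht⟩ := hdv2
      refine ⟨f * ((v.1 j : F[X]) - f ^ n * (v.2 j : F[X])) * t + g ^ q * (v.2 j : F[X]) ^ 2, ?_⟩
      have e2 : f ^ q = f * (f ^ n) ^ 2 := by rw [hn]; ring
      have e3 : C (f.eval 0) = f * (f ^ n) ^ 2 - X ^ q * g ^ q := by rw [← e2, hfq]; ring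
      rw [e3]
      have : (v.1 j : F[X]) = X ^ q * t - f ^ n * (v.2 j : F[X]) := by rw [← ht]; ring
      linear_combination (f * ((v.1 j : F[X]) - f ^ n * (v.2 j : F[X]))) * ht
    have hz : (v.1 j : F[X]) ^ 2 * f - C (f.eval 0) * (v.2 j : F[X]) ^ 2 = 0 := by
      apply eq_zero_of_dvd_of_degree_lt hdv3
      rw [degree_X_pow]
      have hqpos : 0 < q := Fintype.card_pos
      have b1 : ((v.1 j : F[X]) ^ 2 * f).degree < (q : WithBot ℕ) := by
        rcases natDegree_lt_of_memLT (v.1 j).2 with h | h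
        · rw [h]; simp
        · apply (degree_le_natDegree).trans_lt
          have : ((v.1 j : F[X]) ^ 2 * f).natDegree ≤ 2 * (v.1 j : F[X]).natDegree + f.natDegree := by
            refine natDegree_mul_le.trans ?_
            rw [natDegree_pow]
          exact_mod_cast (by omega)
      have b2 : (C (f.eval 0) * (v.2 j : F[X]) ^ 2).degree < (q : WithBot ℕ) := by
        rcases natDegree_lt_of_memLT (v.2 j).2 with h | h
        · rw [h]; simp
        · apply (degree_le_natDegree).trans_lt
          have : (C (f.eval 0) * (v.2 j : F[X]) ^ 2).natDegree ≤ 2 * (v.2 j : F[X]).natDegree := by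
            refine natDegree_mul_le.trans ?_
            rw [natDegree_pow, natDegree_C, zero_add]
          exact_mod_cast (by omega)
      exact (degree_sub_le _ _).trans_lt (max_lt b1 b2)
    obtain ⟨a, b⟩ := hsq _ _ _ h0 (sub_eq_zero.1 hz)
    exact ⟨Subtype.ext a, Subtype.ext b⟩
  refine Prod.ext (funext fun j => (key j j rfl).1) (funext fun j => (key j j rfl).2)

/-- Stepanov's method: the number of points with `f^n = e`. -/
lemma stepanov_count {F : Type*} [Field F] [Fintype F] (f : F[X]) (n J B M : ℕ) (e : F)
    (he : e ^ 2 = 1) (hf : f ≠ 0) (hd : 1 ≤ f.natDegree)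
    (hn : Fintype.card F = 2 * n + 1) (h0 : f.eval 0 ≠ 0)
    (hsq : ∀ (r s : F[X]) (c : F), c ≠ 0 → r ^ 2 * f = C c * s ^ 2 → r = 0 ∧ s = 0)
    (hB : 2 * B + f.natDegree ≤ Fintype.card F + 1) (hM : M ≤ n)
    (hcount : ∑ l ∈ Finset.range M, (B + l * (f.natDegree - 1) + J) < 2 * J * B) :
    (Finset.univ.filter fun x : F => (f.eval x) ^ n = e).card * M
      ≤ B + n * f.natDegree + (J - 1) * Fintype.card F := by
  obtain ⟨v, hv, hPhi⟩ := exists_aux f hf hd n J B M e hM hcount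
  set R : F[X] := ∑ j : Fin J,
    ((v.1 j : F[X]) + f ^ n * (v.2 j : F[X])) * X ^ ((j : ℕ) * Fintype.card F) with hR
  have hR0 : R ≠ 0 := aux_nonzero f n J B hn h0 hsq hB v hv
  have hdeg : R.natDegree ≤ B + n * f.natDegree + (J - 1) * Fintype.card F := by
    apply natDegree_sum_le_of_forall_le
    intro j _
    refine natDegree_mul_le.trans ?_
    rw [natDegree_X_pow]
    have hj : (j : ℕ) ≤ J - 1 := by have := j.2; omega
    gcongr
    refine (natDegree_add_le _ _).trans (max_le ?_ ?_)
    · rcases natDegree_lt_of_memLT (v.1 j).2 with h | h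
      · rw [h]; simp
      · omega
    · refine natDegree_mul_le.trans ?_
      rw [natDegree_pow]
      rcases natDegree_lt_of_memLT (v.2 j).2 with h | h
      · rw [h]; simp
      · omega
  refine le_trans ?_ hdeg
  have hdvd : ∀ x ∈ (Finset.univ.filter fun x : F => (f.eval x) ^ n = e),
      (X - C x) ^ M ∣ R := by
    intro x hx
    have hx' : (f.eval x) ^ n = e := (Finset.mem_filter.1 hx).2
    have he0 : e ≠ 0 := by rintro rfl; simp at he
    rw [X_sub_C_pow_dvd_iff, ← taylor_apply, X_pow_dvd_iff]
    intro l hl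
    have hlq : l < Fintype.card F := by omega
    rw [taylor_coeff, hR, map_sum, eval_finsetSum]
    simp only [hasse_eval_mul_X _ _ _ hlq]
    have hp := hPhi l hl
    rw [PhiMap_apply] at hp
    have hp2 := congrArg (eval x) hp
    rw [eval_finsetSum, eval_zero] at hp2
    have : e * ∑ j : Fin J, eval x (hasseDeriv l ((v.1 j : F[X]) + f ^ n * (v.2 j : F[X]))) * x ^ (j : ℕ) = 0 := by
      rw [← hp2, Finset.mul_sum]
      refine Finset.sum_congr rfl fun j _ => ?_
      simp only [eval_mul, eval_add, eval_pow, eval_X, eval_smul, smul_eq_mul, hx', map_add]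
      ring
    exact (mul_eq_zero.1 this).resolve_left he0
  have hprod : ∏ x ∈ (Finset.univ.filter fun x : F => (f.eval x) ^ n = e), (X - C x) ^ M ∣ R := by
    apply Finset.prod_dvd_of_coprime _ hdvd
    intro a _ b _ hab
    exact (pairwise_coprime_X_sub_C (s := (id : F → F)) Function.injective_id hab).pow
  have := natDegree_le_of_dvd hprod hR0
  refine le_trans ?_ this
  rw [natDegree_prod _ _ (fun x _ => pow_ne_zero _ (X_sub_C_ne_zero x))]
  simp [natDegree_pow]

end Stepanov

section CharSum
open Polynomial

/-- `f` has a simple root in the algebraic closure. -/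
def SimpleRoot {F : Type*} [Field F] (f : F[X]) : Prop :=
  ∃ z : AlgebraicClosure F, aeval z f = 0 ∧ aeval z (derivative f) ≠ 0

lemma SimpleRoot.ne_zero {F : Type*} [Field F] {f : F[X]} (h : SimpleRoot f) : f ≠ 0 := by
  rintro rfl
  obtain ⟨z, -, hz⟩ := h
  simp at hz

lemma SimpleRoot.one_le {F : Type*} [Field F] {f : F[X]} (h : SimpleRoot f) :
    1 ≤ f.natDegree := by
  by_contra hc
  obtain ⟨z, -, hz⟩ := h
  rw [eq_C_of_natDegree_eq_zero (show f.natDegree = 0 by omega)] at hz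
  simp at hz

lemma SimpleRoot.not_sq {F : Type*} [Field F] {f : F[X]} (h : SimpleRoot f)
    (r s : F[X]) (c : F) (hc : c ≠ 0) (hrs : r ^ 2 * f = C c * s ^ 2) : r = 0 ∧ s = 0 := by
  have hf := h.ne_zero
  by_cases hr : r = 0
  · subst hr
    refine ⟨rfl, ?_⟩
    have : C c * s ^ 2 = 0 := by rw [← hrs]; ring
    have hs : s ^ 2 = 0 := (mul_eq_zero.1 this).resolve_left (by simpa using hc)
    exact pow_eq_zero_iff (two_ne_zero) |>.1 hs
  · exfalso
    have hs : s ≠ 0 := by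
      rintro rfl
      have : r ^ 2 * f = 0 := by rw [hrs]; ring
      exact mul_ne_zero (pow_ne_zero 2 hr) hf this
    obtain ⟨z, hz, hz'⟩ := h
    let φ := algebraMap F (AlgebraicClosure F)
    have hm := congrArg (Polynomial.map φ) hrs
    simp only [Polynomial.map_mul, Polynomial.map_pow, map_C] at hm
    have hinj : Function.Injective φ := φ.injective
    have hr' : r.map φ ≠ 0 := (Polynomial.map_ne_zero_iff hinj).2 hr
    have hs' : s.map φ ≠ 0 := (Polynomial.map_ne_zero_iff hinj).2 hs
    have hf' : f.map φ ≠ 0 := (Polynomial.map_ne_zero_iff hinj).2 hf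
    have hc' : (C (φ c) : (AlgebraicClosure F)[X]) ≠ 0 := by simpa using hc
    have h1 := congrArg (rootMultiplicity z) hm
    rw [pow_two, pow_two, rootMultiplicity_mul (mul_ne_zero (mul_ne_zero hr' hr') hf'),
      rootMultiplicity_mul (mul_ne_zero hc' (mul_ne_zero hs' hs')),
      rootMultiplicity_mul (mul_ne_zero hr' hr'), rootMultiplicity_mul (mul_ne_zero hs' hs'),
      rootMultiplicity_C] at h1
    have h2 : 0 < rootMultiplicity z (f.map φ) := by
      rw [rootMultiplicity_pos hf', IsRoot, eval_map_algebraMap]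
      exact hz
    have h3 : ¬ 1 < rootMultiplicity z (f.map φ) := by
      rw [one_lt_rootMultiplicity_iff_isRoot hf']
      rintro ⟨-, h⟩
      apply hz'
      rw [derivative_map, IsRoot, eval_map_algebraMap] at h
      exact h
    omega

lemma SimpleRoot.taylor {F : Type*} [Field F] {f : F[X]} (h : SimpleRoot f) (a : F) :
    SimpleRoot (taylor a f) := by
  obtain ⟨z, hz, hz'⟩ := h
  refine ⟨z - algebraMap F _ a, ?_, ?_⟩
  · rw [taylor_apply, aeval_comp]; simpa using hz
  · rw [taylor_apply, derivative_comp, map_mul, aeval_comp]; simpa using hz'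

lemma step_numeric (q n d M J B : ℕ) (hq : q = 2 * n + 1) (hd1 : 1 ≤ d) (hd : d ≤ 30)
    (hbig : 19044 ≤ q) (hM : M = Nat.sqrt q) (hJ : J = (M + d + 2) / 2) (hB : B = (q + 1 - d) / 2) :
    2 * B + d ≤ q + 1 ∧ M ≤ n ∧ 138 ≤ M ∧ 
    ∑ l ∈ Finset.range M, (B + l * (d - 1) + J) < 2 * J * B := by
  have hM1 : M * M ≤ q := by rw [hM]; exact Nat.sqrt_le q
  have hM2 : 138 ≤ M := by rw [hM, Nat.le_sqrt]; omega
  have hB1 : 2 * B ≤ q + 1 - d := by omega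
  have hB2 : q ≤ 2 * B + d := by omega
  have hJ1 : 2 * J ≤ M + d + 2 := by omega
  have hJ2 : M + d + 1 ≤ 2 * J := by omega
  refine ⟨by omega, by nlinarith, hM2, ?_⟩
  have hs : 2 * ∑ l ∈ Finset.range M, (B + l * (d - 1) + J)
      ≤ 2 * M * B + (d - 1) * (M * M) + 2 * M * J := by
    rw [Finset.sum_add_distrib, Finset.sum_add_distrib, ← Finset.sum_mul]
    simp only [Finset.sum_const, Finset.card_range, smul_eq_mul]
    have := Finset.sum_range_id_mul_two M
    have h3 : M * (M - 1) ≤ M * M := Nat.mul_le_mul_left _ (Nat.sub_le _ _)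
    have h4 : (∑ i ∈ Finset.range M, i) * 2 * (d - 1) ≤ M * M * (d - 1) := by
      rw [this]; exact Nat.mul_le_mul_right _ h3
    nlinarith
  obtain ⟨d', rfl⟩ := Nat.exists_eq_add_of_le hd1
  simp only [Nat.add_sub_cancel_left] at hs ⊢
  have h5 : (M + (1 + d') + 1) * (2 * B) ≤ 2 * J * (2 * B) := Nat.mul_le_mul_right _ hJ2
  have h6 : M * (2 * J) ≤ M * (M + (1 + d') + 2) := Nat.mul_le_mul_left _ hJ1
  have h7 : (d' + 2) * q ≤ (d' + 2) * (2 * B + (1 + d')) := Nat.mul_le_mul_left _ hB2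
  have h8 : (d' + 1) * (M * M) ≤ (d' + 1) * q := Nat.mul_le_mul_left _ hM1
  have h9 : d' ≤ 29 := by omega
  have h10 : M * d' ≤ M * 29 := Nat.mul_le_mul_left _ h9
  have h11 : d' * d' ≤ 29 * 29 := Nat.mul_le_mul h9 h9
  have h12 : 138 * M ≤ M * M := Nat.mul_le_mul_right _ hM2
  nlinarith

lemma count_bound {F : Type*} [Field F] [Fintype F] (f : F[X]) (hs : SimpleRoot f)
    (h0 : f.eval 0 ≠ 0) (n : ℕ) (hn : Fintype.card F = 2 * n + 1) (hd : f.natDegree ≤ 30)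
    (hbig : 19044 ≤ Fintype.card F) (e : F) (he : e ^ 2 = 1) :
    2 * (Finset.univ.filter fun x : F => (f.eval x) ^ n = e).card ≤
      Fintype.card F + (2 * f.natDegree + 1) * (Nat.sqrt (Fintype.card F) + 2) := by
  obtain ⟨hB, hM, hM138, hc⟩ := step_numeric (Fintype.card F) n f.natDegree _ _ _ hn hs.one_le hd
    hbig rfl rfl rfl
  have h := stepanov_count f n _ _ _ e he hs.ne_zero hs.one_le hn h0 hs.not_sq hB hM hc
  set N := (Finset.univ.filter fun x : F => (f.eval x) ^ n = e).card
  set q := Fintype.card F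
  set d := f.natDegree
  set M := Nat.sqrt q
  have hd1 : 1 ≤ d := hs.one_le
  have hqM : q ≤ M * M + 2 * M := by
    have := Nat.sqrt_lt_self (n := 2)
    have h1 : q < (M + 1) * (M + 1) := Nat.lt_succ_sqrt q
    nlinarith
  have hJ : 2 * ((M + d + 2) / 2 - 1) ≤ M + d := by omega
  have hBB : 2 * ((q + 1 - d) / 2) ≤ q := by omega
  have hJq : 2 * ((M + d + 2) / 2 - 1) * q ≤ (M + d) * q := Nat.mul_le_mul_right _ hJ
  have hnd : 2 * (n * d) ≤ q * d := by rw [hn]; nlinarith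
  have h2 : 2 * N * M ≤ (q + (2 * d + 1) * (M + 2)) * M := by
    have : (2 * d + 1) * q ≤ (2 * d + 1) * (M * M + 2 * M) := Nat.mul_le_mul_left _ hqM
    nlinarith
  exact Nat.le_of_mul_le_mul_right h2 (by omega)

lemma chi_sum_aux {F : Type*} [Field F] [Fintype F] (f : F[X]) (hs : SimpleRoot f)
    (h0 : f.eval 0 ≠ 0) (hodd : Fintype.card F % 2 = 1) (hd : f.natDegree ≤ 30)
    (hbig : 19044 ≤ Fintype.card F) :
    |∑ y : F, ((quadraticChar F (f.eval y) : ℤ) : ℝ)| ≤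
      (2 * (f.natDegree : ℝ) + 3) * Real.sqrt (Fintype.card F) := by
  obtain ⟨n, hn⟩ : ∃ n, Fintype.card F = 2 * n + 1 := ⟨Fintype.card F / 2, by omega⟩
  have hch : ringChar F ≠ 2 := by
    intro h
    rw [FiniteField.even_card_iff_char_two] at h
    omega
  have hn2 : Fintype.card F / 2 = n := by omega
  have hneg : (-1 : F) ≠ 1 := Ring.neg_one_ne_one_of_char_ne_two hch
  have hnpos : n ≠ 0 := by omega
  have b1 := count_bound f hs h0 n hn hd hbig 1 (by ring)
  have b2 := count_bound f hs h0 n hn hd hbig (-1) (by ring)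
  set A := Finset.univ.filter fun x : F => (f.eval x) ^ n = 1 with hA
  set A' := Finset.univ.filter fun x : F => (f.eval x) ^ n = -1 with hA'
  set Z := Finset.univ.filter fun x : F => f.eval x = 0 with hZ
  have hpw : ∀ y : F, ((quadraticChar F (f.eval y) : ℤ) : ℝ) =
      (if (f.eval y) ^ n = 1 then 1 else 0) - (if (f.eval y) ^ n = -1 then 1 else 0) := by
    intro y
    by_cases hy : f.eval y = 0
    · rw [hy]; simp [hnpos]
    · rw [quadraticChar_eq_pow_of_char_ne_two hch hy, hn2]
      rcases FiniteField.pow_dichotomy hch hy with h | h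
      · rw [hn2] at h; simp [h, hneg.symm]
      · rw [hn2] at h; simp [h, hneg]
  have hone : ∀ y : F, (1 : ℝ) = (if (f.eval y) ^ n = 1 then 1 else 0) +
      (if (f.eval y) ^ n = -1 then 1 else 0) + (if f.eval y = 0 then 1 else 0) := by
    intro y
    by_cases hy : f.eval y = 0
    · rw [hy]; simp [hnpos]
    · rcases FiniteField.pow_dichotomy hch hy with h | h
      · rw [hn2] at h; simp [h, hneg.symm, hy]
      · rw [hn2] at h; simp [h, hneg, hy]
  have hS : ∑ y : F, ((quadraticChar F (f.eval y) : ℤ) : ℝ) = A.card - A'.card := by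
    rw [Finset.sum_congr rfl (fun y _ => hpw y), Finset.sum_sub_distrib, Finset.sum_boole,
      Finset.sum_boole]
  have hT : (Fintype.card F : ℝ) = A.card + A'.card + Z.card := by
    have : (Fintype.card F : ℝ) = ∑ y : F, (1 : ℝ) := by simp
    rw [this, Finset.sum_congr rfl (fun y _ => hone y), Finset.sum_add_distrib,
      Finset.sum_add_distrib, Finset.sum_boole, Finset.sum_boole, Finset.sum_boole]
  have hZc : Z.card ≤ f.natDegree := by
    have : Z ⊆ f.roots.toFinset := by
      intro y hy
      rw [Multiset.mem_toFinset, mem_roots hs.ne_zero]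
      exact (Finset.mem_filter.1 hy).2
    exact (Finset.card_le_card this).trans ((Multiset.toFinset_card_le _).trans (card_roots' f))
  set q := Fintype.card F with hq
  set s := Real.sqrt q with hsq
  have hMs : (Nat.sqrt q : ℝ) ≤ s := Real.nat_sqrt_le_real_sqrt
  have hs138 : 138 ≤ s := by
    rw [hsq]
    apply Real.le_sqrt_of_sq_le
    have : (19044 : ℝ) ≤ q := by exact_mod_cast hbig
    linarith
  have c1 : 2 * (A.card : ℝ) ≤ q + (2 * f.natDegree + 1) * ((Nat.sqrt q : ℝ) + 2) := by
    exact_mod_cast b1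
  have c2 : 2 * (A'.card : ℝ) ≤ q + (2 * f.natDegree + 1) * ((Nat.sqrt q : ℝ) + 2) := by
    exact_mod_cast b2
  have c3 : (Z.card : ℝ) ≤ f.natDegree := by exact_mod_cast hZc
  have c4 : (f.natDegree : ℝ) ≤ 30 := by exact_mod_cast hd
  have c5 : (0 : ℝ) ≤ f.natDegree := Nat.cast_nonneg _
  have c6 : (2 * (f.natDegree : ℝ) + 1) * ((Nat.sqrt q : ℝ) + 2) ≤
      (2 * (f.natDegree : ℝ) + 1) * (s + 2) := by gcongr
  rw [hS, abs_le]
  constructor <;> nlinarith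

/-- Weil-type bound (Stepanov): character sums of polynomials with a simple root. -/
theorem chi_sum {F : Type*} [Field F] [Fintype F] (f : F[X]) (hs : SimpleRoot f)
    (hodd : Fintype.card F % 2 = 1) (D : ℕ) (hD : f.natDegree ≤ D) (hD30 : D ≤ 30)
    (hbig : 19044 ≤ Fintype.card F) :
    |∑ y : F, ((quadraticChar F (f.eval y) : ℤ) : ℝ)| ≤
      (2 * (D : ℝ) + 3) * Real.sqrt (Fintype.card F) := by
  obtain ⟨a, ha⟩ : ∃ a, f.eval a ≠ 0 := by
    by_contra hc
    push Not at hc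
    have : Finset.univ ⊆ f.roots.toFinset := by
      intro y _
      rw [Multiset.mem_toFinset, mem_roots hs.ne_zero]
      exact hc y
    have := (Finset.card_le_card this).trans
      ((Multiset.toFinset_card_le _).trans (card_roots' f))
    rw [Finset.card_univ] at this
    omega
  have h := chi_sum_aux (taylor a f) (hs.taylor a) (by rw [taylor_eval]; simpa using ha) hodd
    (by rw [natDegree_taylor]; omega) hbig
  rw [natDegree_taylor] at h
  have e : ∑ y : F, ((quadraticChar F ((taylor a f).eval y) : ℤ) : ℝ) =
      ∑ y : F, ((quadraticChar F (f.eval y) : ℤ) : ℝ) := by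
    simp only [taylor_eval]
    exact Fintype.sum_equiv (Equiv.addRight a) _ _ (fun y => by simp)
  rw [e] at h
  refine h.trans ?_
  gcongr

end CharSum

section Gens
set_option linter.unusedSimpArgs false
set_option linter.unusedVariables false
open Polynomial

/-- The factors of the discriminants and resultants of the base polynomials. -/
def facs {R : Type*} [CommRing R] (x : R) : Fin 29 → R :=
  ![x,
    x - 1,
    x + 1,
    x - 2,
    2 * x - 1,
    x - 3,
    x + 3,
    3 * x - 1,
    3 * x + 1,
    3 * x - 2,
    4 * x - 3,
    2 * x - 3,
    3 * x - 4,
    x ^ 2 + x - 1,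
    x ^ 2 + x + 1,
    x ^ 2 - x + 1,
    x ^ 2 - x - 1,
    x ^ 2 + 1,
    x ^ 2 - 3 * x + 1,
    x ^ 2 - 3 * x + 3,
    x ^ 2 - 2 * x + 2,
    3 * x ^ 2 - 3 * x + 1,
    2 * x ^ 2 - 2 * x + 1,
    x ^ 3 + x ^ 2 - 1,
    x ^ 3 - x - 1,
    x ^ 3 - 3 * x ^ 2 + 2 * x - 1,
    x ^ 3 - 2 * x ^ 2 + x - 1,
    x ^ 3 - x ^ 2 + 2 * x - 1,
    x ^ 3 - 2 * x ^ 2 + 3 * x - 1]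

/-- Quadratic, linear, and constant coefficients (in `y`) of the base polynomials
`y, d, n, g1, g2, g3, g4, h1, h3, h2, h4, k1, k2, k3, k4`. -/
def qa {R : Type*} [CommRing R] (x : R) : Fin 15 → R :=
  ![0, 0, 0, 0, 0, 0, 0, 0, 0, 1, -1, -x + 1, -1, 1, -1]
def qb {R : Type*} [CommRing R] (x : R) : Fin 15 → R :=
  ![1, -1, -1, -1, 1, x - 1, x + 1, -2 * x + 1, -1, -2, 2 * x, -x, x ^ 2 + x, -x - 1, x]
def qc {R : Type*} [CommRing R] (x : R) : Fin 15 → R :=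
  ![0, x, 1, x + 1, -x + 1, x, -x, x ^ 2, -x ^ 2 + 2 * x, x, -x, x ^ 2, -x ^ 2, x ^ 2, -x ^ 2 + x]

def Gen {R : Type*} [CommRing R] (x : R) : Prop := ∀ i, facs x i ≠ 0

/-- resultant-type expression; nonzero implies that there is no common root -/
def rsl {R : Type*} [CommRing R] (x : R) (i j : Fin 15) : R :=
  if j.val ≤ 8 then qb x i * qc x j - qb x j * qc x i else
    (qa x i * qc x j - qa x j * qc x i) ^ 2 -
      (qa x i * qb x j - qa x j * qb x i) * (qb x i * qc x j - qb x j * qc x i)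

def disc {R : Type*} [CommRing R] (x : R) (i : Fin 15) : R :=
  qb x i ^ 2 - 4 * (qa x i * qc x i)

lemma cst_ne_1 {K : Type*} [Field K] (h2 : (2 : K) ≠ 0) : (1 : K) ≠ 0 := by
  have := pow_ne_zero 0 h2
  intro h; apply this; linear_combination (1) * h
lemma cst_ne_2 {K : Type*} [Field K] (h2 : (2 : K) ≠ 0) : (2 : K) ≠ 0 := by
  have := pow_ne_zero 1 h2
  intro h; apply this; linear_combination (1) * h
lemma cst_ne_4 {K : Type*} [Field K] (h2 : (2 : K) ≠ 0) : (4 : K) ≠ 0 := by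
  have := pow_ne_zero 2 h2
  intro h; apply this; linear_combination (1) * h
lemma cst_ne_m1 {K : Type*} [Field K] (h2 : (2 : K) ≠ 0) : (-1 : K) ≠ 0 := by
  have := pow_ne_zero 0 h2
  intro h; apply this; linear_combination (-1) * h
lemma cst_ne_m2 {K : Type*} [Field K] (h2 : (2 : K) ≠ 0) : (-2 : K) ≠ 0 := by
  have := pow_ne_zero 1 h2
  intro h; apply this; linear_combination (-1) * h
lemma cst_ne_m4 {K : Type*} [Field K] (h2 : (2 : K) ≠ 0) : (-4 : K) ≠ 0 := by
  have := pow_ne_zero 2 h2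
  intro h; apply this; linear_combination (-1) * h

lemma rsl_ne_0 {K : Type*} [Field K] (x : K) (h2 : (2 : K) ≠ 0) (h : Gen x) :
    ∀ j : Fin 15, 0 < j → rsl x 0 j ≠ 0 := by
  intro j hj
  fin_cases j
  · exact absurd hj (by decide)
  · have e : rsl x 0 1 = (1) * (x) := by
      simp [rsl, qa, qb, qc]; try ring
    exact ne_of_eq_of_ne e (mul_ne_zero (cst_ne_1 h2) (h 0))
  · have e : rsl x 0 2 = (1) := by
      simp [rsl, qa, qb, qc]; try ring
    exact ne_of_eq_of_ne e (cst_ne_1 h2)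
  · have e : rsl x 0 3 = (1) * (x + 1) := by
      simp [rsl, qa, qb, qc]; try ring
    exact ne_of_eq_of_ne e (mul_ne_zero (cst_ne_1 h2) (h 2))
  · have e : rsl x 0 4 = (-1) * (x - 1) := by
      simp [rsl, qa, qb, qc]; try ring
    exact ne_of_eq_of_ne e (mul_ne_zero (cst_ne_m1 h2) (h 1))
  · have e : rsl x 0 5 = (1) * (x) := by
      simp [rsl, qa, qb, qc]; try ring
    exact ne_of_eq_of_ne e (mul_ne_zero (cst_ne_1 h2) (h 0))
  · have e : rsl x 0 6 = (-1) * (x) := by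
      simp [rsl, qa, qb, qc]; try ring
    exact ne_of_eq_of_ne e (mul_ne_zero (cst_ne_m1 h2) (h 0))
  · have e : rsl x 0 7 = (1) * (x) * (x) := by
      simp [rsl, qa, qb, qc]; try ring
    exact ne_of_eq_of_ne e (mul_ne_zero (mul_ne_zero (cst_ne_1 h2) (h 0)) (h 0))
  · have e : rsl x 0 8 = (-1) * (x) * (x - 2) := by
      simp [rsl, qa, qb, qc]; try ring
    exact ne_of_eq_of_ne e (mul_ne_zero (mul_ne_zero (cst_ne_m1 h2) (h 0)) (h 3))
  · have e : rsl x 0 9 = (1) * (x) := by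
      simp [rsl, qa, qb, qc]; try ring
    exact ne_of_eq_of_ne e (mul_ne_zero (cst_ne_1 h2) (h 0))
  · have e : rsl x 0 10 = (1) * (x) := by
      simp [rsl, qa, qb, qc]; try ring
    exact ne_of_eq_of_ne e (mul_ne_zero (cst_ne_1 h2) (h 0))
  · have e : rsl x 0 11 = (-1) * (x) * (x) * (x - 1) := by
      simp [rsl, qa, qb, qc]; try ring
    exact ne_of_eq_of_ne e (mul_ne_zero (mul_ne_zero (mul_ne_zero (cst_ne_m1 h2) (h 0)) (h 0)) (h 1))
  · have e : rsl x 0 12 = (1) * (x) * (x) := by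
      simp [rsl, qa, qb, qc]; try ring
    exact ne_of_eq_of_ne e (mul_ne_zero (mul_ne_zero (cst_ne_1 h2) (h 0)) (h 0))
  · have e : rsl x 0 13 = (1) * (x) * (x) := by
      simp [rsl, qa, qb, qc]; try ring
    exact ne_of_eq_of_ne e (mul_ne_zero (mul_ne_zero (cst_ne_1 h2) (h 0)) (h 0))
  · have e : rsl x 0 14 = (1) * (x) * (x - 1) := by
      simp [rsl, qa, qb, qc]; try ring
    exact ne_of_eq_of_ne e (mul_ne_zero (mul_ne_zero (cst_ne_1 h2) (h 0)) (h 1))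

lemma rsl_ne_1 {K : Type*} [Field K] (x : K) (h2 : (2 : K) ≠ 0) (h : Gen x) :
    ∀ j : Fin 15, 1 < j → rsl x 1 j ≠ 0 := by
  intro j hj
  fin_cases j
  · exact absurd hj (by decide)
  · exact absurd hj (by decide)
  · have e : rsl x 1 2 = (1) * (x - 1) := by
      simp [rsl, qa, qb, qc]; try ring
    exact ne_of_eq_of_ne e (mul_ne_zero (cst_ne_1 h2) (h 1))
  · have e : rsl x 1 3 = (-1) := by
      simp [rsl, qa, qb, qc]; try ring
    exact ne_of_eq_of_ne e (cst_ne_m1 h2)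
  · have e : rsl x 1 4 = (-1) := by
      simp [rsl, qa, qb, qc]; try ring
    exact ne_of_eq_of_ne e (cst_ne_m1 h2)
  · have e : rsl x 1 5 = (-1) * (x) * (x) := by
      simp [rsl, qa, qb, qc]; try ring
    exact ne_of_eq_of_ne e (mul_ne_zero (mul_ne_zero (cst_ne_m1 h2) (h 0)) (h 0))
  · have e : rsl x 1 6 = (-1) * (x) * (x) := by
      simp [rsl, qa, qb, qc]; try ring
    exact ne_of_eq_of_ne e (mul_ne_zero (mul_ne_zero (cst_ne_m1 h2) (h 0)) (h 0))
  · have e : rsl x 1 7 = (1) * (x) * (x - 1) := by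
      simp [rsl, qa, qb, qc]; try ring
    exact ne_of_eq_of_ne e (mul_ne_zero (mul_ne_zero (cst_ne_1 h2) (h 0)) (h 1))
  · have e : rsl x 1 8 = (1) * (x) * (x - 1) := by
      simp [rsl, qa, qb, qc]; try ring
    exact ne_of_eq_of_ne e (mul_ne_zero (mul_ne_zero (cst_ne_1 h2) (h 0)) (h 1))
  · have e : rsl x 1 9 = (1) * (x) * (x - 1) := by
      simp [rsl, qa, qb, qc]; try ring
    exact ne_of_eq_of_ne e (mul_ne_zero (mul_ne_zero (cst_ne_1 h2) (h 0)) (h 1))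
  · have e : rsl x 1 10 = (-1) * (x) * (x - 1) := by
      simp [rsl, qa, qb, qc]; try ring
    exact ne_of_eq_of_ne e (mul_ne_zero (mul_ne_zero (cst_ne_m1 h2) (h 0)) (h 1))
  · have e : rsl x 1 11 = (1) * (x) * (x) * (x - 1) * (x - 1) := by
      simp [rsl, qa, qb, qc]; try ring
    exact ne_of_eq_of_ne e (mul_ne_zero (mul_ne_zero (mul_ne_zero (mul_ne_zero (cst_ne_1 h2) (h 0)) (h 0)) (h 1)) (h 1))
  · have e : rsl x 1 12 = (-1) * (x) * (x) * (x - 1) := by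
      simp [rsl, qa, qb, qc]; try ring
    exact ne_of_eq_of_ne e (mul_ne_zero (mul_ne_zero (mul_ne_zero (cst_ne_m1 h2) (h 0)) (h 0)) (h 1))
  · have e : rsl x 1 13 = (1) * (x) * (x - 1) := by
      simp [rsl, qa, qb, qc]; try ring
    exact ne_of_eq_of_ne e (mul_ne_zero (mul_ne_zero (cst_ne_1 h2) (h 0)) (h 1))
  · have e : rsl x 1 14 = (1) * (x) * (x - 1) := by
      simp [rsl, qa, qb, qc]; try ring
    exact ne_of_eq_of_ne e (mul_ne_zero (mul_ne_zero (cst_ne_1 h2) (h 0)) (h 1))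

lemma rsl_ne_2 {K : Type*} [Field K] (x : K) (h2 : (2 : K) ≠ 0) (h : Gen x) :
    ∀ j : Fin 15, 2 < j → rsl x 2 j ≠ 0 := by
  intro j hj
  fin_cases j
  · exact absurd hj (by decide)
  · exact absurd hj (by decide)
  · exact absurd hj (by decide)
  · have e : rsl x 2 3 = (-1) * (x) := by
      simp [rsl, qa, qb, qc]; try ring
    exact ne_of_eq_of_ne e (mul_ne_zero (cst_ne_m1 h2) (h 0))
  · have e : rsl x 2 4 = (1) * (x - 2) := by
      simp [rsl, qa, qb, qc]; try ring
    exact ne_of_eq_of_ne e (mul_ne_zero (cst_ne_1 h2) (h 3))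
  · have e : rsl x 2 5 = (-1) * (2 * x - 1) := by
      simp [rsl, qa, qb, qc]; try ring
    exact ne_of_eq_of_ne e (mul_ne_zero (cst_ne_m1 h2) (h 4))
  · have e : rsl x 2 6 = (-1) := by
      simp [rsl, qa, qb, qc]; try ring
    exact ne_of_eq_of_ne e (cst_ne_m1 h2)
  · have e : rsl x 2 7 = (-1) * (x - 1) * (x - 1) := by
      simp [rsl, qa, qb, qc]; try ring
    exact ne_of_eq_of_ne e (mul_ne_zero (mul_ne_zero (cst_ne_m1 h2) (h 1)) (h 1))
  · have e : rsl x 2 8 = (1) * (x - 1) * (x - 1) := by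
      simp [rsl, qa, qb, qc]; try ring
    exact ne_of_eq_of_ne e (mul_ne_zero (mul_ne_zero (cst_ne_1 h2) (h 1)) (h 1))
  · have e : rsl x 2 9 = (1) * (x - 1) := by
      simp [rsl, qa, qb, qc]; try ring
    exact ne_of_eq_of_ne e (mul_ne_zero (cst_ne_1 h2) (h 1))
  · have e : rsl x 2 10 = (-1) * (x - 1) := by
      simp [rsl, qa, qb, qc]; try ring
    exact ne_of_eq_of_ne e (mul_ne_zero (cst_ne_m1 h2) (h 1))
  · have e : rsl x 2 11 = (-1) * (x - 1) * (x - 1) * (x - 1) := by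
      simp [rsl, qa, qb, qc]; try ring
    exact ne_of_eq_of_ne e (mul_ne_zero (mul_ne_zero (mul_ne_zero (cst_ne_m1 h2) (h 1)) (h 1)) (h 1))
  · have e : rsl x 2 12 = (-1) * (x - 1) := by
      simp [rsl, qa, qb, qc]; try ring
    exact ne_of_eq_of_ne e (mul_ne_zero (cst_ne_m1 h2) (h 1))
  · have e : rsl x 2 13 = (1) * (x) * (x - 1) := by
      simp [rsl, qa, qb, qc]; try ring
    exact ne_of_eq_of_ne e (mul_ne_zero (mul_ne_zero (cst_ne_1 h2) (h 0)) (h 1))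
  · have e : rsl x 2 14 = (1) * (x - 1) * (x - 1) := by
      simp [rsl, qa, qb, qc]; try ring
    exact ne_of_eq_of_ne e (mul_ne_zero (mul_ne_zero (cst_ne_1 h2) (h 1)) (h 1))

lemma rsl_ne_3 {K : Type*} [Field K] (x : K) (h2 : (2 : K) ≠ 0) (h : Gen x) :
    ∀ j : Fin 15, 3 < j → rsl x 3 j ≠ 0 := by
  intro j hj
  fin_cases j
  · exact absurd hj (by decide)
  · exact absurd hj (by decide)
  · exact absurd hj (by decide)
  · exact absurd hj (by decide)
  · have e : rsl x 3 4 = (-2) := by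
      simp [rsl, qa, qb, qc]; try ring
    exact ne_of_eq_of_ne e (cst_ne_m2 h2)
  · have e : rsl x 3 5 = (-1) * (x ^ 2 + x - 1) := by
      simp [rsl, qa, qb, qc]; try ring
    exact ne_of_eq_of_ne e (mul_ne_zero (cst_ne_m1 h2) (h 13))
  · have e : rsl x 3 6 = (-1) * (x ^ 2 + x + 1) := by
      simp [rsl, qa, qb, qc]; try ring
    exact ne_of_eq_of_ne e (mul_ne_zero (cst_ne_m1 h2) (h 14))
  · have e : rsl x 3 7 = (1) * (x ^ 2 + x - 1) := by
      simp [rsl, qa, qb, qc]; try ring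
    exact ne_of_eq_of_ne e (mul_ne_zero (cst_ne_1 h2) (h 13))
  · have e : rsl x 3 8 = (1) * (x ^ 2 - x + 1) := by
      simp [rsl, qa, qb, qc]; try ring
    exact ne_of_eq_of_ne e (mul_ne_zero (cst_ne_1 h2) (h 15))
  · have e : rsl x 3 9 = (1) * (x ^ 2 + x - 1) := by
      simp [rsl, qa, qb, qc]; try ring
    exact ne_of_eq_of_ne e (mul_ne_zero (cst_ne_1 h2) (h 13))
  · have e : rsl x 3 10 = (-1) * (x ^ 2 - x - 1) := by
      simp [rsl, qa, qb, qc]; try ring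
    exact ne_of_eq_of_ne e (mul_ne_zero (cst_ne_m1 h2) (h 16))
  · have e : rsl x 3 11 = (1) * (x - 1) * (x ^ 3 + x ^ 2 - 1) := by
      simp [rsl, qa, qb, qc]; try ring
    exact ne_of_eq_of_ne e (mul_ne_zero (mul_ne_zero (cst_ne_1 h2) (h 1)) (h 23))
  · have e : rsl x 3 12 = (-1) * (x ^ 3 - x - 1) := by
      simp [rsl, qa, qb, qc]; try ring
    exact ne_of_eq_of_ne e (mul_ne_zero (cst_ne_m1 h2) (h 24))
  · have e : rsl x 3 13 = (1) * (x) * (x) := by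
      simp [rsl, qa, qb, qc]; try ring
    exact ne_of_eq_of_ne e (mul_ne_zero (mul_ne_zero (cst_ne_1 h2) (h 0)) (h 0))
  · have e : rsl x 3 14 = (1) * (x ^ 2 + 1) := by
      simp [rsl, qa, qb, qc]; try ring
    exact ne_of_eq_of_ne e (mul_ne_zero (cst_ne_1 h2) (h 17))

lemma rsl_ne_4 {K : Type*} [Field K] (x : K) (h2 : (2 : K) ≠ 0) (h : Gen x) :
    ∀ j : Fin 15, 4 < j → rsl x 4 j ≠ 0 := by
  intro j hj
  fin_cases j
  · exact absurd hj (by decide)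
  · exact absurd hj (by decide)
  · exact absurd hj (by decide)
  · exact absurd hj (by decide)
  · exact absurd hj (by decide)
  · have e : rsl x 4 5 = (1) * (x ^ 2 - x + 1) := by
      simp [rsl, qa, qb, qc]; try ring
    exact ne_of_eq_of_ne e (mul_ne_zero (cst_ne_1 h2) (h 15))
  · have e : rsl x 4 6 = (1) * (x ^ 2 - x - 1) := by
      simp [rsl, qa, qb, qc]; try ring
    exact ne_of_eq_of_ne e (mul_ne_zero (cst_ne_1 h2) (h 16))
  · have e : rsl x 4 7 = (-1) * (x ^ 2 - 3 * x + 1) := by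
      simp [rsl, qa, qb, qc]; try ring
    exact ne_of_eq_of_ne e (mul_ne_zero (cst_ne_m1 h2) (h 18))
  · have e : rsl x 4 8 = (-1) * (x ^ 2 - x - 1) := by
      simp [rsl, qa, qb, qc]; try ring
    exact ne_of_eq_of_ne e (mul_ne_zero (cst_ne_m1 h2) (h 16))
  · have e : rsl x 4 9 = (1) * (x ^ 2 - 3 * x + 3) := by
      simp [rsl, qa, qb, qc]; try ring
    exact ne_of_eq_of_ne e (mul_ne_zero (cst_ne_1 h2) (h 19))
  · have e : rsl x 4 10 = (-1) * (x ^ 2 - x - 1) := by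
      simp [rsl, qa, qb, qc]; try ring
    exact ne_of_eq_of_ne e (mul_ne_zero (cst_ne_m1 h2) (h 16))
  · have e : rsl x 4 11 = (1) * (x - 1) * (x ^ 3 - 3 * x ^ 2 + 2 * x - 1) := by
      simp [rsl, qa, qb, qc]; try ring
    exact ne_of_eq_of_ne e (mul_ne_zero (mul_ne_zero (cst_ne_1 h2) (h 1)) (h 25))
  · have e : rsl x 4 12 = (-1) * (x ^ 3 - 2 * x ^ 2 + x - 1) := by
      simp [rsl, qa, qb, qc]; try ring
    exact ne_of_eq_of_ne e (mul_ne_zero (cst_ne_m1 h2) (h 26))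
  · have e : rsl x 4 13 = (1) * (x ^ 2 - 2 * x + 2) := by
      simp [rsl, qa, qb, qc]; try ring
    exact ne_of_eq_of_ne e (mul_ne_zero (cst_ne_1 h2) (h 20))
  · have e : rsl x 4 14 = (1) * (x - 1) * (x - 1) := by
      simp [rsl, qa, qb, qc]; try ring
    exact ne_of_eq_of_ne e (mul_ne_zero (mul_ne_zero (cst_ne_1 h2) (h 1)) (h 1))

lemma rsl_ne_5 {K : Type*} [Field K] (x : K) (h2 : (2 : K) ≠ 0) (h : Gen x) :
    ∀ j : Fin 15, 5 < j → rsl x 5 j ≠ 0 := by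
  intro j hj
  fin_cases j
  · exact absurd hj (by decide)
  · exact absurd hj (by decide)
  · exact absurd hj (by decide)
  · exact absurd hj (by decide)
  · exact absurd hj (by decide)
  · exact absurd hj (by decide)
  · have e : rsl x 5 6 = (-2) * (x) * (x) := by
      simp [rsl, qa, qb, qc]; try ring
    exact ne_of_eq_of_ne e (mul_ne_zero (mul_ne_zero (cst_ne_m2 h2) (h 0)) (h 0))
  · have e : rsl x 5 7 = (1) * (x) * (x ^ 2 + x - 1) := by
      simp [rsl, qa, qb, qc]; try ring
    exact ne_of_eq_of_ne e (mul_ne_zero (mul_ne_zero (cst_ne_1 h2) (h 0)) (h 13))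
  · have e : rsl x 5 8 = (-1) * (x) * (x ^ 2 - 3 * x + 1) := by
      simp [rsl, qa, qb, qc]; try ring
    exact ne_of_eq_of_ne e (mul_ne_zero (mul_ne_zero (cst_ne_m1 h2) (h 0)) (h 18))
  · have e : rsl x 5 9 = (1) * (x) * (x ^ 2 + x - 1) := by
      simp [rsl, qa, qb, qc]; try ring
    exact ne_of_eq_of_ne e (mul_ne_zero (mul_ne_zero (cst_ne_1 h2) (h 0)) (h 13))
  · have e : rsl x 5 10 = (1) * (x) * (3 * x ^ 2 - 3 * x + 1) := by
      simp [rsl, qa, qb, qc]; try ring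
    exact ne_of_eq_of_ne e (mul_ne_zero (mul_ne_zero (cst_ne_1 h2) (h 0)) (h 21))
  · have e : rsl x 5 11 = (-1) * (x) * (x) * (x - 1) * (x - 1) * (x - 1) := by
      simp [rsl, qa, qb, qc]; try ring
    exact ne_of_eq_of_ne e (mul_ne_zero (mul_ne_zero (mul_ne_zero (mul_ne_zero (mul_ne_zero (cst_ne_m1 h2) (h 0)) (h 0)) (h 1)) (h 1)) (h 1))
  · have e : rsl x 5 12 = (1) * (x) * (x) * (2 * x ^ 2 - 2 * x + 1) := by
      simp [rsl, qa, qb, qc]; try ring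
    exact ne_of_eq_of_ne e (mul_ne_zero (mul_ne_zero (mul_ne_zero (cst_ne_1 h2) (h 0)) (h 0)) (h 22))
  · have e : rsl x 5 13 = (1) * (x) * (x ^ 3 - x ^ 2 + 2 * x - 1) := by
      simp [rsl, qa, qb, qc]; try ring
    exact ne_of_eq_of_ne e (mul_ne_zero (mul_ne_zero (cst_ne_1 h2) (h 0)) (h 27))
  · have e : rsl x 5 14 = (1) * (x) * (x ^ 3 - 2 * x ^ 2 + 3 * x - 1) := by
      simp [rsl, qa, qb, qc]; try ring
    exact ne_of_eq_of_ne e (mul_ne_zero (mul_ne_zero (cst_ne_1 h2) (h 0)) (h 28))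

lemma rsl_ne_6 {K : Type*} [Field K] (x : K) (h2 : (2 : K) ≠ 0) (h : Gen x) :
    ∀ j : Fin 15, 6 < j → rsl x 6 j ≠ 0 := by
  intro j hj
  fin_cases j
  · exact absurd hj (by decide)
  · exact absurd hj (by decide)
  · exact absurd hj (by decide)
  · exact absurd hj (by decide)
  · exact absurd hj (by decide)
  · exact absurd hj (by decide)
  · exact absurd hj (by decide)
  · have e : rsl x 6 7 = (1) * (x) * (x ^ 2 - x + 1) := by
      simp [rsl, qa, qb, qc]; try ring
    exact ne_of_eq_of_ne e (mul_ne_zero (mul_ne_zero (cst_ne_1 h2) (h 0)) (h 15))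
  · have e : rsl x 6 8 = (-1) * (x) * (x ^ 2 - x - 1) := by
      simp [rsl, qa, qb, qc]; try ring
    exact ne_of_eq_of_ne e (mul_ne_zero (mul_ne_zero (cst_ne_m1 h2) (h 0)) (h 16))
  · have e : rsl x 6 9 = (1) * (x) * (x ^ 2 + x - 1) := by
      simp [rsl, qa, qb, qc]; try ring
    exact ne_of_eq_of_ne e (mul_ne_zero (mul_ne_zero (cst_ne_1 h2) (h 0)) (h 13))
  · have e : rsl x 6 10 = (-1) * (x) * (x ^ 2 - x - 1) := by
      simp [rsl, qa, qb, qc]; try ring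
    exact ne_of_eq_of_ne e (mul_ne_zero (mul_ne_zero (cst_ne_m1 h2) (h 0)) (h 16))
  · have e : rsl x 6 11 = (-1) * (x) * (x) * (x - 1) * (x ^ 2 + 1) := by
      simp [rsl, qa, qb, qc]; try ring
    exact ne_of_eq_of_ne e (mul_ne_zero (mul_ne_zero (mul_ne_zero (mul_ne_zero (cst_ne_m1 h2) (h 0)) (h 0)) (h 1)) (h 17))
  · have e : rsl x 6 12 = (1) * (x) * (x) := by
      simp [rsl, qa, qb, qc]; try ring
    exact ne_of_eq_of_ne e (mul_ne_zero (mul_ne_zero (cst_ne_1 h2) (h 0)) (h 0))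
  · have e : rsl x 6 13 = (1) * (x) * (x ^ 3 + x ^ 2 - 1) := by
      simp [rsl, qa, qb, qc]; try ring
    exact ne_of_eq_of_ne e (mul_ne_zero (mul_ne_zero (cst_ne_1 h2) (h 0)) (h 23))
  · have e : rsl x 6 14 = (1) * (x) * (x ^ 3 - x - 1) := by
      simp [rsl, qa, qb, qc]; try ring
    exact ne_of_eq_of_ne e (mul_ne_zero (mul_ne_zero (cst_ne_1 h2) (h 0)) (h 24))

lemma rsl_ne_7 {K : Type*} [Field K] (x : K) (h2 : (2 : K) ≠ 0) (h : Gen x) :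
    ∀ j : Fin 15, 7 < j → rsl x 7 j ≠ 0 := by
  intro j hj
  fin_cases j
  · exact absurd hj (by decide)
  · exact absurd hj (by decide)
  · exact absurd hj (by decide)
  · exact absurd hj (by decide)
  · exact absurd hj (by decide)
  · exact absurd hj (by decide)
  · exact absurd hj (by decide)
  · exact absurd hj (by decide)
  · have e : rsl x 7 8 = (2) * (x) * (x - 1) * (x - 1) := by
      simp [rsl, qa, qb, qc]; try ring
    exact ne_of_eq_of_ne e (mul_ne_zero (mul_ne_zero (mul_ne_zero (cst_ne_2 h2) (h 0)) (h 1)) (h 1))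
  · have e : rsl x 7 9 = (1) * (x) * (x - 1) * (x ^ 2 + x - 1) := by
      simp [rsl, qa, qb, qc]; try ring
    exact ne_of_eq_of_ne e (mul_ne_zero (mul_ne_zero (mul_ne_zero (cst_ne_1 h2) (h 0)) (h 1)) (h 13))
  · have e : rsl x 7 10 = (-1) * (x) * (x - 1) * (3 * x ^ 2 - 3 * x + 1) := by
      simp [rsl, qa, qb, qc]; try ring
    exact ne_of_eq_of_ne e (mul_ne_zero (mul_ne_zero (mul_ne_zero (cst_ne_m1 h2) (h 0)) (h 1)) (h 21))
  · have e : rsl x 7 11 = (1) * (x) * (x) * (x - 1) * (x - 1) * (x - 1) * (x - 1) := by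
      simp [rsl, qa, qb, qc]; try ring
    exact ne_of_eq_of_ne e (mul_ne_zero (mul_ne_zero (mul_ne_zero (mul_ne_zero (mul_ne_zero (mul_ne_zero (cst_ne_1 h2) (h 0)) (h 0)) (h 1)) (h 1)) (h 1)) (h 1))
  · have e : rsl x 7 12 = (-1) * (x) * (x) * (x - 1) * (2 * x ^ 2 - 2 * x + 1) := by
      simp [rsl, qa, qb, qc]; try ring
    exact ne_of_eq_of_ne e (mul_ne_zero (mul_ne_zero (mul_ne_zero (mul_ne_zero (cst_ne_m1 h2) (h 0)) (h 0)) (h 1)) (h 22))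
  · have e : rsl x 7 13 = (1) * (x) * (x) * (x - 1) * (3 * x - 2) := by
      simp [rsl, qa, qb, qc]; try ring
    exact ne_of_eq_of_ne e (mul_ne_zero (mul_ne_zero (mul_ne_zero (mul_ne_zero (cst_ne_1 h2) (h 0)) (h 0)) (h 1)) (h 9))
  · have e : rsl x 7 14 = (1) * (x) * (x - 1) * (x - 1) * (3 * x - 1) := by
      simp [rsl, qa, qb, qc]; try ring
    exact ne_of_eq_of_ne e (mul_ne_zero (mul_ne_zero (mul_ne_zero (mul_ne_zero (cst_ne_1 h2) (h 0)) (h 1)) (h 1)) (h 7))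

lemma rsl_ne_8 {K : Type*} [Field K] (x : K) (h2 : (2 : K) ≠ 0) (h : Gen x) :
    ∀ j : Fin 15, 8 < j → rsl x 8 j ≠ 0 := by
  intro j hj
  fin_cases j
  · exact absurd hj (by decide)
  · exact absurd hj (by decide)
  · exact absurd hj (by decide)
  · exact absurd hj (by decide)
  · exact absurd hj (by decide)
  · exact absurd hj (by decide)
  · exact absurd hj (by decide)
  · exact absurd hj (by decide)
  · exact absurd hj (by decide)
  · have e : rsl x 8 9 = (1) * (x) * (x - 1) * (x ^ 2 - 3 * x + 3) := by
      simp [rsl, qa, qb, qc]; try ring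
    exact ne_of_eq_of_ne e (mul_ne_zero (mul_ne_zero (mul_ne_zero (cst_ne_1 h2) (h 0)) (h 1)) (h 19))
  · have e : rsl x 8 10 = (1) * (x) * (x - 1) * (x ^ 2 - x - 1) := by
      simp [rsl, qa, qb, qc]; try ring
    exact ne_of_eq_of_ne e (mul_ne_zero (mul_ne_zero (mul_ne_zero (cst_ne_1 h2) (h 0)) (h 1)) (h 16))
  · have e : rsl x 8 11 = (1) * (x) * (x) * (x - 1) * (x - 1) * (x - 1) * (x - 3) := by
      simp [rsl, qa, qb, qc]; try ring
    exact ne_of_eq_of_ne e (mul_ne_zero (mul_ne_zero (mul_ne_zero (mul_ne_zero (mul_ne_zero (mul_ne_zero (cst_ne_1 h2) (h 0)) (h 0)) (h 1)) (h 1)) (h 1)) (h 5))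
  · have e : rsl x 8 12 = (1) * (x) * (x) * (x - 1) * (2 * x - 3) := by
      simp [rsl, qa, qb, qc]; try ring
    exact ne_of_eq_of_ne e (mul_ne_zero (mul_ne_zero (mul_ne_zero (mul_ne_zero (cst_ne_1 h2) (h 0)) (h 0)) (h 1)) (h 11))
  · have e : rsl x 8 13 = (1) * (x) * (x - 1) * (x ^ 2 - 2 * x + 2) := by
      simp [rsl, qa, qb, qc]; try ring
    exact ne_of_eq_of_ne e (mul_ne_zero (mul_ne_zero (mul_ne_zero (cst_ne_1 h2) (h 0)) (h 1)) (h 20))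
  · have e : rsl x 8 14 = (1) * (x) * (x - 1) * (x - 1) * (x - 1) := by
      simp [rsl, qa, qb, qc]; try ring
    exact ne_of_eq_of_ne e (mul_ne_zero (mul_ne_zero (mul_ne_zero (mul_ne_zero (cst_ne_1 h2) (h 0)) (h 1)) (h 1)) (h 1))

lemma rsl_ne_9 {K : Type*} [Field K] (x : K) (h2 : (2 : K) ≠ 0) (h : Gen x) :
    ∀ j : Fin 15, 9 < j → rsl x 9 j ≠ 0 := by
  intro j hj
  fin_cases j
  · exact absurd hj (by decide)
  · exact absurd hj (by decide)
  · exact absurd hj (by decide)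
  · exact absurd hj (by decide)
  · exact absurd hj (by decide)
  · exact absurd hj (by decide)
  · exact absurd hj (by decide)
  · exact absurd hj (by decide)
  · exact absurd hj (by decide)
  · exact absurd hj (by decide)
  · have e : rsl x 9 10 = (4) * (x) * (x - 1) * (x - 1) := by
      simp [rsl, qa, qb, qc]; try ring
    exact ne_of_eq_of_ne e (mul_ne_zero (mul_ne_zero (mul_ne_zero (cst_ne_4 h2) (h 0)) (h 1)) (h 1))
  · have e : rsl x 9 11 = (1) * (x) * (x) * (x - 1) * (4 * x - 3) := by
      simp [rsl, qa, qb, qc]; try ring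
    exact ne_of_eq_of_ne e (mul_ne_zero (mul_ne_zero (mul_ne_zero (mul_ne_zero (cst_ne_1 h2) (h 0)) (h 0)) (h 1)) (h 10))
  · have e : rsl x 9 12 = (1) * (x) * (x) * (x - 1) * (x - 1) * (x + 3) := by
      simp [rsl, qa, qb, qc]; try ring
    exact ne_of_eq_of_ne e (mul_ne_zero (mul_ne_zero (mul_ne_zero (mul_ne_zero (mul_ne_zero (cst_ne_1 h2) (h 0)) (h 0)) (h 1)) (h 1)) (h 6))
  · have e : rsl x 9 13 = (1) * (x) * (x - 1) * (x - 1) * (x - 1) := by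
      simp [rsl, qa, qb, qc]; try ring
    exact ne_of_eq_of_ne e (mul_ne_zero (mul_ne_zero (mul_ne_zero (mul_ne_zero (cst_ne_1 h2) (h 0)) (h 1)) (h 1)) (h 1))
  · have e : rsl x 9 14 = (1) * (x) * (x - 1) * (x - 2) * (x - 2) := by
      simp [rsl, qa, qb, qc]; try ring
    exact ne_of_eq_of_ne e (mul_ne_zero (mul_ne_zero (mul_ne_zero (mul_ne_zero (cst_ne_1 h2) (h 0)) (h 1)) (h 3)) (h 3))

lemma rsl_ne_10 {K : Type*} [Field K] (x : K) (h2 : (2 : K) ≠ 0) (h : Gen x) :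
    ∀ j : Fin 15, 10 < j → rsl x 10 j ≠ 0 := by
  intro j hj
  fin_cases j
  · exact absurd hj (by decide)
  · exact absurd hj (by decide)
  · exact absurd hj (by decide)
  · exact absurd hj (by decide)
  · exact absurd hj (by decide)
  · exact absurd hj (by decide)
  · exact absurd hj (by decide)
  · exact absurd hj (by decide)
  · exact absurd hj (by decide)
  · exact absurd hj (by decide)
  · exact absurd hj (by decide)
  · have e : rsl x 10 11 = (-1) * (x) * (x) * (x - 1) * (2 * x - 1) * (2 * x - 1) := by
      simp [rsl, qa, qb, qc]; try ring
    exact ne_of_eq_of_ne e (mul_ne_zero (mul_ne_zero (mul_ne_zero (mul_ne_zero (mul_ne_zero (cst_ne_m1 h2) (h 0)) (h 0)) (h 1)) (h 4)) (h 4))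
  · have e : rsl x 10 12 = (-1) * (x) * (x) * (x - 1) * (x - 1) * (x - 1) := by
      simp [rsl, qa, qb, qc]; try ring
    exact ne_of_eq_of_ne e (mul_ne_zero (mul_ne_zero (mul_ne_zero (mul_ne_zero (mul_ne_zero (cst_ne_m1 h2) (h 0)) (h 0)) (h 1)) (h 1)) (h 1))
  · have e : rsl x 10 13 = (1) * (x) * (x - 1) * (x - 1) * (3 * x + 1) := by
      simp [rsl, qa, qb, qc]; try ring
    exact ne_of_eq_of_ne e (mul_ne_zero (mul_ne_zero (mul_ne_zero (mul_ne_zero (cst_ne_1 h2) (h 0)) (h 1)) (h 1)) (h 8))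
  · have e : rsl x 10 14 = (1) * (x) * (x) * (x - 1) * (3 * x - 4) := by
      simp [rsl, qa, qb, qc]; try ring
    exact ne_of_eq_of_ne e (mul_ne_zero (mul_ne_zero (mul_ne_zero (mul_ne_zero (cst_ne_1 h2) (h 0)) (h 0)) (h 1)) (h 12))

lemma rsl_ne_11 {K : Type*} [Field K] (x : K) (h2 : (2 : K) ≠ 0) (h : Gen x) :
    ∀ j : Fin 15, 11 < j → rsl x 11 j ≠ 0 := by
  intro j hj
  fin_cases j
  · exact absurd hj (by decide)
  · exact absurd hj (by decide)
  · exact absurd hj (by decide)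
  · exact absurd hj (by decide)
  · exact absurd hj (by decide)
  · exact absurd hj (by decide)
  · exact absurd hj (by decide)
  · exact absurd hj (by decide)
  · exact absurd hj (by decide)
  · exact absurd hj (by decide)
  · exact absurd hj (by decide)
  · exact absurd hj (by decide)
  · have e : rsl x 11 12 = (-1) * (x) * (x) * (x) * (x) * (x) * (x) * (x - 1) := by
      simp [rsl, qa, qb, qc]; try ring
    exact ne_of_eq_of_ne e (mul_ne_zero (mul_ne_zero (mul_ne_zero (mul_ne_zero (mul_ne_zero (mul_ne_zero (mul_ne_zero (cst_ne_m1 h2) (h 0)) (h 0)) (h 0)) (h 0)) (h 0)) (h 0)) (h 1))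
  · have e : rsl x 11 13 = (1) * (x) * (x) * (x - 1) * (x ^ 3 + x ^ 2 - 1) := by
      simp [rsl, qa, qb, qc]; try ring
    exact ne_of_eq_of_ne e (mul_ne_zero (mul_ne_zero (mul_ne_zero (mul_ne_zero (cst_ne_1 h2) (h 0)) (h 0)) (h 1)) (h 23))
  · have e : rsl x 11 14 = (1) * (x) * (x) * (x - 1) * (x - 1) * (x ^ 2 + 1) := by
      simp [rsl, qa, qb, qc]; try ring
    exact ne_of_eq_of_ne e (mul_ne_zero (mul_ne_zero (mul_ne_zero (mul_ne_zero (mul_ne_zero (cst_ne_1 h2) (h 0)) (h 0)) (h 1)) (h 1)) (h 17))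

lemma rsl_ne_12 {K : Type*} [Field K] (x : K) (h2 : (2 : K) ≠ 0) (h : Gen x) :
    ∀ j : Fin 15, 12 < j → rsl x 12 j ≠ 0 := by
  intro j hj
  fin_cases j
  · exact absurd hj (by decide)
  · exact absurd hj (by decide)
  · exact absurd hj (by decide)
  · exact absurd hj (by decide)
  · exact absurd hj (by decide)
  · exact absurd hj (by decide)
  · exact absurd hj (by decide)
  · exact absurd hj (by decide)
  · exact absurd hj (by decide)
  · exact absurd hj (by decide)
  · exact absurd hj (by decide)
  · exact absurd hj (by decide)
  · exact absurd hj (by decide)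
  · have e : rsl x 12 13 = (1) * (x) * (x) * (x - 1) * (x - 1) * (x + 1) * (x + 1) := by
      simp [rsl, qa, qb, qc]; try ring
    exact ne_of_eq_of_ne e (mul_ne_zero (mul_ne_zero (mul_ne_zero (mul_ne_zero (mul_ne_zero (mul_ne_zero (cst_ne_1 h2) (h 0)) (h 0)) (h 1)) (h 1)) (h 2)) (h 2))
  · have e : rsl x 12 14 = (1) * (x) * (x) * (x - 1) * (x ^ 3 - x - 1) := by
      simp [rsl, qa, qb, qc]; try ring
    exact ne_of_eq_of_ne e (mul_ne_zero (mul_ne_zero (mul_ne_zero (mul_ne_zero (cst_ne_1 h2) (h 0)) (h 0)) (h 1)) (h 24))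

lemma rsl_ne_13 {K : Type*} [Field K] (x : K) (h2 : (2 : K) ≠ 0) (h : Gen x) :
    ∀ j : Fin 15, 13 < j → rsl x 13 j ≠ 0 := by
  intro j hj
  fin_cases j
  · exact absurd hj (by decide)
  · exact absurd hj (by decide)
  · exact absurd hj (by decide)
  · exact absurd hj (by decide)
  · exact absurd hj (by decide)
  · exact absurd hj (by decide)
  · exact absurd hj (by decide)
  · exact absurd hj (by decide)
  · exact absurd hj (by decide)
  · exact absurd hj (by decide)
  · exact absurd hj (by decide)
  · exact absurd hj (by decide)
  · exact absurd hj (by decide)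
  · exact absurd hj (by decide)
  · have e : rsl x 13 14 = (1) * (x) * (x - 1) := by
      simp [rsl, qa, qb, qc]; try ring
    exact ne_of_eq_of_ne e (mul_ne_zero (mul_ne_zero (cst_ne_1 h2) (h 0)) (h 1))

lemma disc_ne {K : Type*} [Field K] (x : K) (h2 : (2 : K) ≠ 0) (h : Gen x) (i : Fin 15) :
    disc x i ≠ 0 := by
  fin_cases i
  · have e : disc x 0 = (1) := by
      simp [disc, qa, qb, qc]; try ring
    exact ne_of_eq_of_ne e (cst_ne_1 h2)
  · have e : disc x 1 = (1) := by
      simp [disc, qa, qb, qc]; try ring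
    exact ne_of_eq_of_ne e (cst_ne_1 h2)
  · have e : disc x 2 = (1) := by
      simp [disc, qa, qb, qc]; try ring
    exact ne_of_eq_of_ne e (cst_ne_1 h2)
  · have e : disc x 3 = (1) := by
      simp [disc, qa, qb, qc]; try ring
    exact ne_of_eq_of_ne e (cst_ne_1 h2)
  · have e : disc x 4 = (1) := by
      simp [disc, qa, qb, qc]; try ring
    exact ne_of_eq_of_ne e (cst_ne_1 h2)
  · have e : disc x 5 = (1) * (x - 1) * (x - 1) := by
      simp [disc, qa, qb, qc]; try ring
    exact ne_of_eq_of_ne e (mul_ne_zero (mul_ne_zero (cst_ne_1 h2) (h 1)) (h 1))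
  · have e : disc x 6 = (1) * (x + 1) * (x + 1) := by
      simp [disc, qa, qb, qc]; try ring
    exact ne_of_eq_of_ne e (mul_ne_zero (mul_ne_zero (cst_ne_1 h2) (h 2)) (h 2))
  · have e : disc x 7 = (1) * (2 * x - 1) * (2 * x - 1) := by
      simp [disc, qa, qb, qc]; try ring
    exact ne_of_eq_of_ne e (mul_ne_zero (mul_ne_zero (cst_ne_1 h2) (h 4)) (h 4))
  · have e : disc x 8 = (1) := by
      simp [disc, qa, qb, qc]; try ring
    exact ne_of_eq_of_ne e (cst_ne_1 h2)
  · have e : disc x 9 = (-4) * (x - 1) := by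
      simp [disc, qa, qb, qc]; try ring
    exact ne_of_eq_of_ne e (mul_ne_zero (cst_ne_m4 h2) (h 1))
  · have e : disc x 10 = (4) * (x) * (x - 1) := by
      simp [disc, qa, qb, qc]; try ring
    exact ne_of_eq_of_ne e (mul_ne_zero (mul_ne_zero (cst_ne_4 h2) (h 0)) (h 1))
  · have e : disc x 11 = (1) * (x) * (x) * (4 * x - 3) := by
      simp [disc, qa, qb, qc]; try ring
    exact ne_of_eq_of_ne e (mul_ne_zero (mul_ne_zero (mul_ne_zero (cst_ne_1 h2) (h 0)) (h 0)) (h 10))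
  · have e : disc x 12 = (1) * (x) * (x) * (x - 1) * (x + 3) := by
      simp [disc, qa, qb, qc]; try ring
    exact ne_of_eq_of_ne e (mul_ne_zero (mul_ne_zero (mul_ne_zero (mul_ne_zero (cst_ne_1 h2) (h 0)) (h 0)) (h 1)) (h 6))
  · have e : disc x 13 = (-1) * (x - 1) * (3 * x + 1) := by
      simp [disc, qa, qb, qc]; try ring
    exact ne_of_eq_of_ne e (mul_ne_zero (mul_ne_zero (cst_ne_m1 h2) (h 1)) (h 8))
  · have e : disc x 14 = (-1) * (x) * (3 * x - 4) := by
      simp [disc, qa, qb, qc]; try ring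
    exact ne_of_eq_of_ne e (mul_ne_zero (mul_ne_zero (cst_ne_m1 h2) (h 0)) (h 12))

end Gens

section Gens2
open Polynomial

lemma rsl_ne {K : Type*} [Field K] (x : K) (h2 : (2 : K) ≠ 0) (h : Gen x) (i j : Fin 15)
    (hij : i < j) : rsl x i j ≠ 0 := by
  fin_cases i
  · exact rsl_ne_0 x h2 h j hij
  · exact rsl_ne_1 x h2 h j hij
  · exact rsl_ne_2 x h2 h j hij
  · exact rsl_ne_3 x h2 h j hij
  · exact rsl_ne_4 x h2 h j hij
  · exact rsl_ne_5 x h2 h j hij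
  · exact rsl_ne_6 x h2 h j hij
  · exact rsl_ne_7 x h2 h j hij
  · exact rsl_ne_8 x h2 h j hij
  · exact rsl_ne_9 x h2 h j hij
  · exact rsl_ne_10 x h2 h j hij
  · exact rsl_ne_11 x h2 h j hij
  · exact rsl_ne_12 x h2 h j hij
  · exact rsl_ne_13 x h2 h j hij
  · exact absurd hij (by change ¬ ((14 : Fin 15) < j); omega)

/-- base polynomial values -/
def bv {R : Type*} [CommRing R] (x z : R) (i : Fin 15) : R :=
  qa x i * z ^ 2 + qb x i * z + qc x i

lemma qa_lin {R : Type*} [CommRing R] (x : R) (i : Fin 15) (hi : i.val ≤ 8) : qa x i = 0 := by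
  fin_cases i <;> simp [qa] at hi ⊢

lemma no_common {K : Type*} [Field K] (x z : K) (h2 : (2 : K) ≠ 0) (h : Gen x) (i j : Fin 15)
    (hij : i ≠ j) (hi : bv x z i = 0) (hj : bv x z j = 0) : False := by
  wlog hlt : i < j generalizing i j
  · exact this j i hij.symm hj hi (lt_of_le_of_ne (not_lt.1 hlt) hij.symm)
  apply rsl_ne x h2 h i j hlt
  unfold bv at hi hj
  unfold rsl
  split_ifs with h8
  · rw [qa_lin x i (by have : i.val < j.val := hlt; omega)] at hi
    rw [qa_lin x j h8] at hj
    linear_combination qb x i * hj - qb x j * hi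
  · generalize qa x i = a at *
    generalize qb x i = b at *
    generalize qc x i = c at *
    generalize qa x j = a' at *
    generalize qb x j = b' at *
    generalize qc x j = c' at *
    have e1 : (a * b' - a' * b) * z = - (a * c' - a' * c) := by
      linear_combination a * hj - a' * hi
    have e2 : (a * b' - a' * b) * z ^ 2 = (b * c' - b' * c) := by
      linear_combination b' * hi - b * hj
    linear_combination (a * b' - a' * b) * e2 - ((a * b' - a' * b) * z - (a * c' - a' * c)) * e1

lemma gen_map {F K : Type*} [Field F] [Field K] (φ : F →+* K) (x : F) (h : Gen x) :
    Gen (φ x) := by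
  intro i
  have : facs (φ x) i = φ (facs x i) := by
    fin_cases i <;> simp [facs, map_ofNat]
  rw [this]
  exact (map_ne_zero φ).2 (h i)

lemma qa_map {F K : Type*} [Field F] [Field K] (φ : F →+* K) (x : F) (i : Fin 15) :
    φ (qa x i) = qa (φ x) i := by
  fin_cases i <;> simp [qa, map_ofNat]
lemma qb_map {F K : Type*} [Field F] [Field K] (φ : F →+* K) (x : F) (i : Fin 15) :
    φ (qb x i) = qb (φ x) i := by
  fin_cases i <;> simp [qb, map_ofNat]
lemma qc_map {F K : Type*} [Field F] [Field K] (φ : F →+* K) (x : F) (i : Fin 15) :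
    φ (qc x i) = qc (φ x) i := by
  fin_cases i <;> simp [qc, map_ofNat]

lemma quad_root {K : Type*} [Field K] [IsAlgClosed K] (h2 : (2 : K) ≠ 0) (a b c : K)
    (h : b ^ 2 - 4 * (a * c) ≠ 0) : ∃ z, a * z ^ 2 + b * z + c = 0 := by
  by_cases ha : a = 0
  · subst ha
    have hb : b ≠ 0 := by rintro rfl; simp at h
    exact ⟨-c / b, by field_simp; ring⟩
  · obtain ⟨s, hs⟩ := IsAlgClosed.exists_pow_nat_eq (b ^ 2 - 4 * (a * c)) (n := 2) (by norm_num)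
    refine ⟨(-b + s) / (2 * a), ?_⟩
    field_simp
    linear_combination hs

variable {F : Type*} [Field F]

/-- base polynomials -/
def gp (x : F) (i : Fin 15) : F[X] := C (qa x i) * X ^ 2 + C (qb x i) * X + C (qc x i)

lemma eval_gp (x y : F) (i : Fin 15) : (gp x i).eval y = bv x y i := by
  simp [gp, bv]

lemma aeval_gp (x : F) (z : AlgebraicClosure F) (i : Fin 15) :
    aeval z (gp x i) = bv (algebraMap F _ x) z i := by
  simp [gp, bv, qa_map, qb_map, qc_map]

lemma aeval_gp' (x : F) (z : AlgebraicClosure F) (i : Fin 15) :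
    aeval z (derivative (gp x i)) =
      2 * qa (algebraMap F _ x) i * z + qb (algebraMap F _ x) i := by
  simp [gp, qa_map, qb_map]
  ring

/-- which generators are twisted by `d` -/
def tw (i : Fin 15) : Bool := (i == 2) || decide (7 ≤ i.val)

/-- naive degrees of the generators -/
def dg : Fin 15 → ℕ := ![1, 1, 2, 1, 1, 1, 1, 2, 2, 3, 3, 3, 3, 3, 3]

def gq (x : F) (i : Fin 15) : F[X] := gp x i * (if tw i then gp x 1 else 1)

lemma natDegree_gp (x : F) (i : Fin 15) : (gp x i).natDegree ≤ 2 := by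
  unfold gp; compute_degree

lemma natDegree_gp_lin (x : F) (i : Fin 15) (hi : i.val ≤ 8) : (gp x i).natDegree ≤ 1 := by
  unfold gp; rw [qa_lin x i hi]; simp only [C_0, zero_mul, zero_add]; compute_degree

lemma natDegree_gq (x : F) (i : Fin 15) : (gq x i).natDegree ≤ dg i := by
  have h1 := natDegree_gp_lin x 1 (by decide)
  have hb : (gp x i).natDegree ≤ if i.val ≤ 8 then 1 else 2 := by
    split_ifs with h
    · exact natDegree_gp_lin x i h
    · exact natDegree_gp x i
  have ht : (if tw i then gp x 1 else 1).natDegree ≤ if tw i then 1 else 0 := by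
    split_ifs with h
    · exact h1
    · simp
  unfold gq
  refine natDegree_mul_le.trans ((add_le_add hb ht).trans ?_)
  clear hb ht h1
  revert i
  decide

lemma natDegree_prod_gq (x : F) (S : Finset (Fin 15)) :
    (∏ i ∈ S, gq x i).natDegree ≤ ∑ i ∈ S, dg i :=
  (natDegree_prod_le _ _).trans (Finset.sum_le_sum fun i _ => natDegree_gq x i)

lemma sum_dg_le (S : Finset (Fin 15)) : ∑ i ∈ S, dg i ≤ 30 := by
  refine (Finset.sum_le_sum_of_subset (Finset.subset_univ S)).trans ?_
  decide

lemma simpleRoot_aux (x : F) (h2 : (2 : F) ≠ 0) (h : Gen x) (S : Finset (Fin 15)) (i : Fin 15)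
    (hi : i ∈ S) (hi1 : i ≠ 1 ∨ S = {1}) : SimpleRoot (∏ i ∈ S, gq x i) := by
  set K := AlgebraicClosure F
  set φ := algebraMap F K
  have h2' : (2 : K) ≠ 0 := by
    have := (map_ne_zero φ).2 h2
    rwa [map_ofNat] at this
  have h' : Gen (φ x) := gen_map φ x h
  have hd := disc_ne (φ x) h2' h' i
  obtain ⟨z, hz⟩ := quad_root h2' _ _ _ hd
  have hb : bv (φ x) z i = 0 := hz
  have hne : ∀ j, j ≠ i → bv (φ x) z j ≠ 0 := fun j hj hj0 => no_common (φ x) z h2' h' j i hj hj0 hb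
  have hder : 2 * qa (φ x) i * z + qb (φ x) i ≠ 0 := by
    intro h0
    apply hd
    unfold disc
    linear_combination (2 * qa (φ x) i * z + qb (φ x) i) * h0 - 4 * qa (φ x) i * hz
  have htw : ∀ j ∈ S, aeval z (if tw j then gp x 1 else 1) ≠ 0 := by
    intro j hj
    split_ifs with ht
    · rw [aeval_gp]
      apply hne
      rcases hi1 with hi1 | hi1
      · exact hi1.symm
      · rw [hi1, Finset.mem_singleton] at hj
        subst hj
        exact absurd ht (by decide)
    · simp
  refine ⟨z, ?_, ?_⟩
  · rw [map_prod]
    apply Finset.prod_eq_zero hi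
    rw [gq, map_mul, aeval_gp, hb, zero_mul]
  · rw [← Finset.mul_prod_erase S _ hi, derivative_mul, map_add, map_mul, map_mul,
      show aeval z (gq x i) = 0 by rw [gq, map_mul, aeval_gp, hb, zero_mul], zero_mul, add_zero]
    apply mul_ne_zero
    · rw [gq, derivative_mul, map_add, map_mul, map_mul, aeval_gp, hb, zero_mul, add_zero, aeval_gp']
      exact mul_ne_zero hder (htw i hi)
    · rw [map_prod, Finset.prod_ne_zero_iff]
      intro j hj
      rw [Finset.mem_erase] at hj
      rw [gq, map_mul, aeval_gp]
      exact mul_ne_zero (hne j hj.1) (htw j hj.2)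

lemma simpleRoot_prod (x : F) (h2 : (2 : F) ≠ 0) (h : Gen x) (S : Finset (Fin 15))
    (hS : S.Nonempty) : SimpleRoot (∏ i ∈ S, gq x i) := by
  by_cases hc : ∃ i ∈ S, i ≠ 1
  · obtain ⟨i, hi, hi1⟩ := hc
    exact simpleRoot_aux x h2 h S i hi (Or.inl hi1)
  · push Not at hc
    have : S = {1} := Finset.eq_singleton_iff_nonempty_unique_mem.2 ⟨hS, hc⟩
    exact simpleRoot_aux x h2 h S 1 (by rw [this]; simp) (Or.inr this)

variable [Fintype F]

/-- the real-valued quadratic character -/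
def chr (z : F) : ℝ := ((quadraticChar F z : ℤ) : ℝ)

lemma chr_mul (a b : F) : chr (a * b) = chr a * chr b := by
  unfold chr; rw [map_mul]; push_cast; ring

/-- sign of the `i`-th generator -/
def sg (x y : F) (i : Fin 15) : ℝ := chr ((gq x i).eval y)

lemma chi_prod_sum (x : F) (hodd : Fintype.card F % 2 = 1) (h : Gen x)
    (hbig : 19044 ≤ Fintype.card F) (S : Finset (Fin 15)) (hS : S.Nonempty) :
    |∑ y : F, ∏ i ∈ S, sg x y i| ≤
      (2 * (∑ i ∈ S, dg i : ℕ) + 3) * Real.sqrt (Fintype.card F) := by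
  have h2 : (2 : F) ≠ 0 := by
    apply Ring.two_ne_zero
    intro h
    rw [FiniteField.even_card_iff_char_two] at h
    omega
  have := chi_sum (∏ i ∈ S, gq x i) (simpleRoot_prod x h2 h S hS) hodd _ (natDegree_prod_gq x S)
    (sum_dg_le S) hbig
  convert this using 4 with y
  rw [eval_prod, map_prod]
  simp [sg, chr]

/-- the exceptional set is small -/
lemma card_not_gen (hodd : Fintype.card F % 2 = 1) :
    (Finset.univ.filter fun x : F => ¬ Gen x).card ≤ 87 := by
  have h2 : (2 : F) ≠ 0 := by
    apply Ring.two_ne_zero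
    intro h
    rw [FiniteField.even_card_iff_char_two] at h
    omega
  have h4 : (4 : F) ≠ 0 := cst_ne_4 h2
  have hev : ∀ (x : F) i, (facs (X : F[X]) i).eval x = facs x i := by
    intro x i
    fin_cases i <;> simp [facs]
  have hdeg : ∀ i, (facs (X : F[X]) i).natDegree ≤ 3 := by
    intro i
    fin_cases i <;> simp [facs] <;> compute_degree <;> norm_num
  have hne : ∀ i, facs (X : F[X]) i ≠ 0 := by
    intro i h0
    have e0 := hev 0 i
    have e1 := hev 1 i
    rw [h0] at e0 e1
    revert e0 e1
    fin_cases i <;> norm_num [facs, h2, h4]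
    exact fun _ h => h4 h.symm
  have hsub : (Finset.univ.filter fun x : F => ¬ Gen x) ⊆
      Finset.univ.biUnion fun i => (facs (X : F[X]) i).roots.toFinset := by
    intro x hx
    rw [Finset.mem_filter] at hx
    have hx2 := hx.2
    unfold Gen at hx2
    push Not at hx2
    obtain ⟨i, hi⟩ := hx2
    rw [Finset.mem_biUnion]
    refine ⟨i, Finset.mem_univ _, ?_⟩
    rw [Multiset.mem_toFinset, mem_roots (hne i), IsRoot, hev, hi]
  refine (Finset.card_le_card hsub).trans (Finset.card_biUnion_le.trans ?_)
  calc _ ≤ ∑ i : Fin 29, 3 := Finset.sum_le_sum fun i _ =>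
        (Multiset.toFinset_card_le _).trans ((card_roots' _).trans (hdeg i))
    _ = 87 := by simp

end Gens2

section RepSec
set_option linter.unusedSimpArgs false
set_option linter.unusedVariables false

/-- total degree of a set of generators -/
def dgS (S : Finset (Fin 15)) : ℝ := ((∑ i ∈ S, dg i : ℕ) : ℝ)

lemma dgS_nonneg (S : Finset (Fin 15)) : 0 ≤ dgS S := Nat.cast_nonneg _

lemma dgS_union {S T : Finset (Fin 15)} (h : Disjoint S T) : dgS (S ∪ T) = dgS S + dgS T := by
  unfold dgS; rw [Finset.sum_union h]; push_cast; ring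

/-- `Φ` is a combination of products of generators from `V`, with mean `m`, coefficient
norm at most `L` and degree-weighted norm at most `W`. -/
def SRep {Y : Type*} (s : Y → Fin 15 → ℝ) (V : Finset (Fin 15)) (Φ : Y → ℝ) (m L W : ℝ) : Prop :=
  ∃ (ι : Type) (_ : Fintype ι) (c : ι → ℝ) (S : ι → Finset (Fin 15)),
    (∀ i, S i ⊆ V) ∧ (∀ y, Φ y = ∑ i, c i * ∏ j ∈ S i, s y j) ∧
    (∑ i, if S i = ∅ then c i else 0) = m ∧ ∑ i, |c i| ≤ L ∧ ∑ i, |c i| * dgS (S i) ≤ W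

variable {Y : Type*} {s : Y → Fin 15 → ℝ}

lemma SRep.mul {V V' : Finset (Fin 15)} {Φ Φ' : Y → ℝ} {m m' L L' W W' : ℝ}
    (h : SRep s V Φ m L W) (h' : SRep s V' Φ' m' L' W') (hd : Disjoint V V') :
    SRep s (V ∪ V') (fun y => Φ y * Φ' y) (m * m') (L * L') (L * W' + L' * W) := by
  obtain ⟨ι, _, c, S, hS, hΦ, hm, hL, hW⟩ := h
  obtain ⟨ι', _, c', S', hS', hΦ', hm', hL', hW'⟩ := h'
  have hdis : ∀ i j, Disjoint (S i) (S' j) := fun i j =>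
    Finset.disjoint_of_subset_left (hS i) (Finset.disjoint_of_subset_right (hS' j) hd)
  have n1 : 0 ≤ ∑ i, |c i| := Finset.sum_nonneg fun i _ => abs_nonneg _
  have n2 : 0 ≤ ∑ i, |c' i| := Finset.sum_nonneg fun i _ => abs_nonneg _
  have n3 : 0 ≤ ∑ i, |c i| * dgS (S i) :=
    Finset.sum_nonneg fun i _ => mul_nonneg (abs_nonneg _) (dgS_nonneg _)
  have n4 : 0 ≤ ∑ i, |c' i| * dgS (S' i) :=
    Finset.sum_nonneg fun i _ => mul_nonneg (abs_nonneg _) (dgS_nonneg _)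
  refine ⟨ι × ι', inferInstance, fun p => c p.1 * c' p.2, fun p => S p.1 ∪ S' p.2, ?_, ?_, ?_, ?_, ?_⟩
  · exact fun p => Finset.union_subset_union (hS _) (hS' _)
  · intro y
    change Φ y * Φ' y = _
    rw [hΦ, hΦ', Finset.sum_mul_sum, Fintype.sum_prod_type]
    refine Finset.sum_congr rfl fun i _ => Finset.sum_congr rfl fun j _ => ?_
    rw [Finset.prod_union (hdis i j)]
    ring
  · rw [← hm, ← hm', Finset.sum_mul_sum, Fintype.sum_prod_type]
    refine Finset.sum_congr rfl fun i _ => Finset.sum_congr rfl fun j _ => ?_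
    simp only [Finset.union_eq_empty]
    by_cases h1 : S i = ∅ <;> by_cases h2 : S' j = ∅ <;> simp [h1, h2]
  · have : ∑ p : ι × ι', |c p.1 * c' p.2| = (∑ i, |c i|) * ∑ j, |c' j| := by
      rw [Finset.sum_mul_sum, Fintype.sum_prod_type]
      simp only [abs_mul]
    rw [this]
    exact mul_le_mul hL hL' n2 (n1.trans hL)
  · have : ∑ p : ι × ι', |c p.1 * c' p.2| * dgS (S p.1 ∪ S' p.2) =
        (∑ i, |c i|) * (∑ j, |c' j| * dgS (S' j)) + (∑ j, |c' j|) * ∑ i, |c i| * dgS (S i) := by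
      rw [mul_comm (∑ j, |c' j|), Finset.sum_mul_sum, Finset.sum_mul_sum, Fintype.sum_prod_type,
        ← Finset.sum_add_distrib]
      refine Finset.sum_congr rfl fun i _ => ?_
      rw [← Finset.sum_add_distrib]
      refine Finset.sum_congr rfl fun j _ => ?_
      rw [dgS_union (hdis i j), abs_mul]
      ring
    rw [this]
    exact add_le_add (mul_le_mul hL hW' n4 (n1.trans hL)) (mul_le_mul hL' hW n3 (n2.trans hL'))

lemma SRep.add {V V' : Finset (Fin 15)} {Φ Φ' : Y → ℝ} {m m' L L' W W' : ℝ}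
    (h : SRep s V Φ m L W) (h' : SRep s V' Φ' m' L' W') :
    SRep s (V ∪ V') (fun y => Φ y + Φ' y) (m + m') (L + L') (W + W') := by
  obtain ⟨ι, _, c, S, hS, hΦ, hm, hL, hW⟩ := h
  obtain ⟨ι', _, c', S', hS', hΦ', hm', hL', hW'⟩ := h'
  refine ⟨ι ⊕ ι', inferInstance, Sum.elim c c', Sum.elim S S', ?_, ?_, ?_, ?_, ?_⟩
  · rintro (i | i)
    · exact (hS i).trans Finset.subset_union_left
    · exact (hS' i).trans Finset.subset_union_right
  · intro y
    simp [hΦ, hΦ', Fintype.sum_sum_type]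
  · rw [← hm, ← hm', Fintype.sum_sum_type]
    congr!
  · simpa [Fintype.sum_sum_type] using add_le_add hL hL'
  · simpa [Fintype.sum_sum_type] using add_le_add hW hW'

lemma SRep.congr {V : Finset (Fin 15)} {Φ : Y → ℝ} {m m' L L' W W' : ℝ}
    (h : SRep s V Φ m L W) (hm : m = m') (hL : L = L') (hW : W = W') : SRep s V Φ m' L' W' := by
  subst hm hL hW; exact h

lemma rep_lin (i : Fin 15) (e : ℝ) (he : |e| = 1) :
    SRep s {i} (fun y => (1 + e * s y i) / 2) (1 / 2) 1 (dg i / 2) := by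
  refine ⟨Fin 2, inferInstance, ![1 / 2, e / 2], ![∅, {i}], ?_, ?_, ?_, ?_, ?_⟩
  · intro j; fin_cases j <;> simp
  · intro y; simp [Fin.sum_univ_succ]; ring
  · simp [Fin.sum_univ_succ]
  · simp [Fin.sum_univ_succ, abs_div, he]; norm_num
  · simp [Fin.sum_univ_succ, dgS, abs_div, he]; apply le_of_eq; ring

def Afun (s k g h : ℝ) : ℝ :=
  5 / 8 + s / 8 + k / 4 - s * k / 4 - g / 8 + h / 8 + g * h / 8 - s * g / 8 + s * h / 8
    + s * g * h / 8

def Bfun (g s k l : ℝ) : ℝ :=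
  (1 + g) * (1 - s) * (1 + k) / 8 + (1 - g) * (1 + s) * (1 + l) / 8 +
    (1 - g) * (1 - s) * (1 + k) * (1 + l) / 16

lemma rep_A (i k g h : Fin 15) (hik : i ≠ k) (hig : i ≠ g) (hih : i ≠ h) (hkg : k ≠ g)
    (hkh : k ≠ h) (hgh : g ≠ h) :
    SRep s {i, k, g, h} (fun y => Afun (s y i) (s y k) (s y g) (s y h)) (5 / 8) 2
      ((3 * dg i + 2 * dg k + 2 * dg g + 2 * dg h) / 4) := by
  refine ⟨Fin 10, inferInstance,
    ![5 / 8, 1 / 8, 1 / 4, -1 / 4, -1 / 8, 1 / 8, 1 / 8, -1 / 8, 1 / 8, 1 / 8],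
    ![∅, {i}, {k}, {i, k}, {g}, {h}, {g, h}, {i, g}, {i, h}, {i, g, h}], ?_, ?_, ?_, ?_, ?_⟩
  · intro j; fin_cases j <;> simp [Finset.subset_iff]
  · intro y
    simp [Fin.sum_univ_succ, Finset.prod_insert, Finset.prod_pair, hik, hig, hih, hgh, Afun]
    ring
  · simp [Fin.sum_univ_succ]
  · simp [Fin.sum_univ_succ, abs_div]; norm_num
  · simp [Fin.sum_univ_succ, dgS, abs_div, Finset.sum_insert, Finset.sum_pair, hik, hig, hih, hgh]
    apply le_of_eq; ring

lemma rep_B (i k g h : Fin 15) (hik : i ≠ k) (hig : i ≠ g) (hih : i ≠ h) (hkg : k ≠ g)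
    (hkh : k ≠ h) (hgh : g ≠ h) :
    SRep s {i, k, g, h} (fun y => Bfun (s y i) (s y k) (s y g) (s y h)) (5 / 16) (15 / 8)
      ((dg i + dg k + dg g + dg h) * (3 / 4)) := by
  refine ⟨Fin 16, inferInstance,
    ![5 / 16, -1 / 16, -1 / 16, -3 / 16, 3 / 16, 1 / 16, -3 / 16, -1 / 16,
      3 / 16, -3 / 16, 1 / 16, -1 / 16, 1 / 16, -1 / 16, -1 / 16, 1 / 16],
    ![∅, {i}, {k}, {i, k}, {g}, {i, g}, {k, g}, {i, k, g}, {h}, {i, h}, {k, h}, {i, k, h},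
      {g, h}, {i, g, h}, {k, g, h}, {i, k, g, h}], ?_, ?_, ?_, ?_, ?_⟩
  · intro j; fin_cases j <;> simp [Finset.subset_iff]
  · intro y
    simp [Fin.sum_univ_succ, Finset.prod_insert, Finset.prod_pair, hik, hig, hih, hgh, hkg, hkh,
      Bfun]
    ring
  · simp [Fin.sum_univ_succ]
  · simp [Fin.sum_univ_succ, abs_div]; norm_num
  · simp [Fin.sum_univ_succ, dgS, abs_div, Finset.sum_insert, Finset.sum_pair, hik, hig, hih, hgh,
      hkg, hkh]
    apply le_of_eq; ring

/-- the (extended) indicator function of goodness, in terms of signs -/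
def Phi (ε : ℝ) (t : Fin 15 → ℝ) : ℝ :=
  (1 + 1 * t 0) / 2 *
  ((1 + -ε * t 1) / 2 * ((1 + 1 * t 2) / 2) * ((1 + -1 * t 7) / 2) * ((1 + -1 * t 8) / 2) *
    Afun (t 5) (t 11) (t 3) (t 9) * Afun (t 4) (t 14) (t 6) (t 10)
  + (1 + ε * t 1) / 2 * ((1 + -1 * t 2) / 2) * ((1 + -1 * t 9) / 2) * ((1 + -1 * t 10) / 2) *
    Afun (t 3) (t 13) (t 5) (t 7) * Afun (t 6) (t 12) (t 4) (t 8)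
  + (1 + -ε * t 1) / 2 * ((1 + -1 * t 2) / 2) * ((1 + -1 * t 7) / 2) * ((1 + -1 * t 8) / 2) *
    ((1 + -1 * t 9) / 2) * ((1 + -1 * t 10) / 2) *
    Bfun (t 3) (t 5) (t 11) (t 13) * Bfun (t 6) (t 4) (t 14) (t 12))

lemma rep_Phi (ε : ℝ) (he : |ε| = 1) :
    ∃ V, SRep s V (fun y => Phi ε (s y)) (825 / 32768) (737 / 64) (7367 / 64) := by
  have he' : |-ε| = 1 := by rw [abs_neg, he]
  have h1 : |(1 : ℝ)| = 1 := by norm_num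
  have h1' : |(-1 : ℝ)| = 1 := by norm_num
  have E := (((((rep_lin (s := s) 1 (-ε) he').mul (rep_lin 2 1 h1) (by decide)).mul
    (rep_lin 7 (-1) h1') (by decide)).mul (rep_lin 8 (-1) h1') (by decide)).mul
    (rep_A 5 11 3 9 (by decide) (by decide) (by decide) (by decide) (by decide) (by decide))
      (by decide)).mul
    (rep_A 4 14 6 10 (by decide) (by decide) (by decide) (by decide) (by decide) (by decide))
      (by decide)
  have H := (((((rep_lin (s := s) 1 ε he).mul (rep_lin 2 (-1) h1') (by decide)).mul
    (rep_lin 9 (-1) h1') (by decide)).mul (rep_lin 10 (-1) h1') (by decide)).mul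
    (rep_A 3 13 5 7 (by decide) (by decide) (by decide) (by decide) (by decide) (by decide))
      (by decide)).mul
    (rep_A 6 12 4 8 (by decide) (by decide) (by decide) (by decide) (by decide) (by decide))
      (by decide)
  have B := (((((((rep_lin (s := s) 1 (-ε) he').mul (rep_lin 2 (-1) h1') (by decide)).mul
    (rep_lin 7 (-1) h1') (by decide)).mul (rep_lin 8 (-1) h1') (by decide)).mul
    (rep_lin 9 (-1) h1') (by decide)).mul (rep_lin 10 (-1) h1') (by decide)).mul
    (rep_B 3 5 11 13 (by decide) (by decide) (by decide) (by decide) (by decide) (by decide))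
      (by decide)).mul
    (rep_B 6 4 14 12 (by decide) (by decide) (by decide) (by decide) (by decide) (by decide))
      (by decide)
  have R := (rep_lin (s := s) 0 1 h1).mul ((E.add H).add B) (by decide)
  exact ⟨_, R.congr (by norm_num) (by norm_num) (by simp [dg]; norm_num)⟩

variable {F : Type*} [Field F] [Fintype F]

lemma rep_sum (x : F) (hodd : Fintype.card F % 2 = 1) (h : Gen x)
    (hbig : 19044 ≤ Fintype.card F) {V : Finset (Fin 15)} {Φ : F → ℝ} {m L W : ℝ}
    (hR : SRep (sg x) V Φ m L W) :
    |∑ y, Φ y - m * Fintype.card F| ≤ (2 * W + 3 * L) * Real.sqrt (Fintype.card F) := by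
  obtain ⟨ι, _, c, S, hS, hΦ, hm, hL, hW⟩ := hR
  set r := Real.sqrt (Fintype.card F) with hr
  have hr0 : 0 ≤ r := Real.sqrt_nonneg _
  have e : ∑ y, Φ y - m * Fintype.card F =
      ∑ i, c i * (if S i = ∅ then 0 else ∑ y, ∏ j ∈ S i, sg x y j) := by
    rw [← hm, Finset.sum_mul, Finset.sum_congr rfl (fun y _ => hΦ y), Finset.sum_comm,
      ← Finset.sum_sub_distrib]
    refine Finset.sum_congr rfl fun i _ => ?_
    rw [← Finset.mul_sum]
    split_ifs with hi
    · simp [hi]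
    · ring
  rw [e]
  calc _ ≤ ∑ i, |c i * (if S i = ∅ then 0 else ∑ y, ∏ j ∈ S i, sg x y j)| :=
        Finset.abs_sum_le_sum_abs _ _
    _ ≤ ∑ i, |c i| * ((2 * dgS (S i) + 3) * r) := by
        refine Finset.sum_le_sum fun i _ => ?_
        rw [abs_mul]
        refine mul_le_mul_of_nonneg_left ?_ (abs_nonneg _)
        split_ifs with hi
        · rw [abs_zero]
          exact mul_nonneg (by linarith [dgS_nonneg (S i)]) hr0
        · exact chi_prod_sum x hodd h hbig (S i) (Finset.nonempty_iff_ne_empty.2 hi)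
    _ = (2 * ∑ i, |c i| * dgS (S i) + 3 * ∑ i, |c i|) * r := by
        rw [Finset.mul_sum, Finset.mul_sum, ← Finset.sum_add_distrib, Finset.sum_mul]
        refine Finset.sum_congr rfl fun i _ => ?_
        ring
    _ ≤ _ := by
        refine mul_le_mul_of_nonneg_right ?_ hr0
        linarith

theorem Phi_sum (x : F) (hodd : Fintype.card F % 2 = 1) (h : Gen x)
    (hbig : 19044 ≤ Fintype.card F) (ε : ℝ) (he : |ε| = 1) :
    |∑ y, Phi ε (sg x y) - 825 / 32768 * Fintype.card F| ≤
      265 * Real.sqrt (Fintype.card F) := by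
  obtain ⟨V, hV⟩ := rep_Phi (s := sg x) ε he
  refine (rep_sum x hodd h hbig hV).trans ?_
  refine mul_le_mul_of_nonneg_right ?_ (Real.sqrt_nonneg _)
  norm_num

end RepSec

section Quasi

/-- squareness as a Boolean -/
def sqb {F : Type*} [Field F] (z : F) : Bool := decide (IsSquare z)

def sgn (b : Bool) : ℝ := cond b 1 (-1)

lemma sgn_inj {b c : Bool} (h : sgn b = sgn c) : b = c := by
  cases b <;> cases c <;> simp [sgn] at h ⊢ <;> norm_num at h

lemma sgn_mul (b c : Bool) : sgn (b == c) = sgn b * sgn c := by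
  cases b <;> cases c <;> simp [sgn]

section fin
variable {F : Type*} [Field F] [Fintype F]

lemma chr_eq (z : F) (hz : z ≠ 0) : chr z = sgn (sqb z) := by
  by_cases h : IsSquare z <;> simp [chr, quadraticChar_apply, quadraticCharFun, hz, h, sgn, sqb]

lemma sqb_mul (z w : F) (hz : z ≠ 0) (hw : w ≠ 0) : sqb (z * w) = (sqb z == sqb w) := by
  apply sgn_inj
  rw [sgn_mul, ← chr_eq z hz, ← chr_eq w hw, ← chr_eq _ (mul_ne_zero hz hw), chr_mul]

lemma sqb_neg_one (h3 : Fintype.card F % 4 = 3) : sqb (-1 : F) = false := by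
  unfold sqb
  rw [decide_eq_false_iff_not, FiniteField.isSquare_neg_one_iff]
  simpa using h3

lemma sqb_neg (h3 : Fintype.card F % 4 = 3) (z : F) (hz : z ≠ 0) : sqb (-z) = !(sqb z) := by
  rw [← neg_one_mul, sqb_mul _ _ (by simp) hz, sqb_neg_one h3]
  cases sqb z <;> rfl

lemma sqb_inv (z : F) : sqb z⁻¹ = sqb z := by
  unfold sqb; simp

end fin

section alg
variable {F : Type*} [Field F]

lemma qop_eq (a b u v : F) : qop a b u v = u + cond (sqb (v - u)) a b * (v - u) := by
  unfold qop sqb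
  by_cases h : IsSquare (v - u) <;> simp [h]

/-- associativity equation with `u = 0` -/
def Assoc0 (a b v w : F) : Prop :=
  cond (sqb v) a b * v + cond (sqb (w - cond (sqb v) a b * v)) a b * (w - cond (sqb v) a b * v) =
    cond (sqb (v + cond (sqb (w - v)) a b * (w - v))) a b * (v + cond (sqb (w - v)) a b * (w - v))

lemma assoc_iff (a b u v w : F) :
    qop a b (qop a b u v) w = qop a b u (qop a b v w) ↔ Assoc0 a b (v - u) (w - u) := by
  unfold Assoc0
  simp only [qop_eq]
  rw [show w - (u + cond (sqb (v - u)) a b * (v - u)) =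
      w - u - cond (sqb (v - u)) a b * (v - u) by ring,
    show v + cond (sqb (w - v)) a b * (w - v) - u =
      v - u + cond (sqb (w - u - (v - u))) a b * (w - u - (v - u)) by
        rw [show w - u - (v - u) = w - v by ring]; ring]
  constructor
  · intro h; linear_combination h
  · intro h; linear_combination h

lemma maxNA_iff (a b : F) : MaxNA a b ↔ ∀ v w, Assoc0 a b v w → v = 0 ∧ w = 0 := by
  unfold MaxNA
  simp only [assoc_iff]
  constructor
  · intro h v w hvw
    have := h 0 v w (by simpa using hvw)
    exact ⟨this.1.symm, by rw [← this.2, this.1]⟩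
  · intro h u v w hvw
    have := h _ _ hvw
    have h1 := sub_eq_zero.1 this.1
    have h2 := sub_eq_zero.1 this.2
    exact ⟨h1.symm, by rw [h1, h2]⟩

def pP (x y : F) : Bool → Bool → Bool → F
  | true, true, true => x * y
  | true, true, false => x
  | true, false, true => x
  | true, false, false => bv x y 3
  | false, true, true => bv x y 6
  | false, true, false => y
  | false, false, true => y
  | false, false, false => 1

def pS (x y : F) : Bool → Bool → Bool → F
  | true, true, true => x * y
  | true, true, false => bv x y 5
  | true, false, true => y
  | true, false, false => x
  | false, true, true => y
  | false, true, false => x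
  | false, false, true => bv x y 4
  | false, false, false => 1

def pT (x y : F) : Bool → Bool → Bool → F
  | true, true, true => x * x * y * bv x y 2
  | true, true, false => bv x y 11
  | true, false, true => x * y * bv x y 2
  | true, false, false => bv x y 7
  | false, true, true => y * bv x y 8
  | false, true, false => x * bv x y 2
  | false, false, true => bv x y 14
  | false, false, false => bv x y 2

def pU (x y : F) : Bool → Bool → Bool → F
  | true, true, true => x * y * y * (x - 1)
  | true, true, false => x * bv x y 9
  | true, false, true => bv x y 12
  | true, false, false => y * (x - 1)
  | false, true, true => x * y * (x - 1)
  | false, true, false => bv x y 13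
  | false, false, true => bv x y 10
  | false, false, false => x - 1

lemma bv_vals (x y : F) : bv x y 0 = y ∧ bv x y 1 = x - y ∧ bv x y 2 = 1 - y ∧
    bv x y 3 = x - y + 1 ∧ bv x y 4 = 1 + y - x ∧ bv x y 5 = x * y + x - y ∧
    bv x y 6 = x * y - x + y ∧ bv x y 7 = x ^ 2 - 2 * x * y + y ∧
    bv x y 8 = 2 * x - x ^ 2 - y ∧ bv x y 9 = x + y ^ 2 - 2 * y ∧
    bv x y 10 = 2 * x * y - x - y ^ 2 ∧ bv x y 11 = x ^ 2 - x * y ^ 2 - x * y + y ^ 2 ∧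
    bv x y 12 = x ^ 2 * y - x ^ 2 + x * y - y ^ 2 ∧ bv x y 13 = x ^ 2 - x * y + y ^ 2 - y ∧
    bv x y 14 = -x ^ 2 + x * y + x - y ^ 2 := by
  refine ⟨?_, ?_, ?_, ?_, ?_, ?_, ?_, ?_, ?_, ?_, ?_, ?_, ?_, ?_, ?_⟩ <;>
    simp [bv, qa, qb, qc] <;> ring

lemma id_P (x y : F) (hD : x - y ≠ 0) (c2 c3 c4 : Bool) :
    cond c4 (x * (1 - y) / (x - y)) ((1 - y) / (x - y)) *
      cond c3 (x * (1 - y) / (x - y)) ((1 - y) / (x - y)) -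
      cond c2 (x * (1 - y) / (x - y)) ((1 - y) / (x - y)) =
    -((x - 1) * (1 - y) / (x - y) ^ 2) * pP x y c2 c3 c4 := by
  obtain ⟨-, -, -, e3, -, -, e6, -⟩ := bv_vals x y
  cases c2 <;> cases c3 <;> cases c4 <;> simp only [cond_true, cond_false, pP, e3, e6] <;>
    field_simp <;> ring

lemma id_S (x y : F) (hD : x - y ≠ 0) (c1 c2 c4 : Bool) :
    cond c1 (x * (1 - y) / (x - y)) ((1 - y) / (x - y)) +
      cond c2 (x * (1 - y) / (x - y)) ((1 - y) / (x - y)) -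
      cond c1 (x * (1 - y) / (x - y)) ((1 - y) / (x - y)) *
      cond c2 (x * (1 - y) / (x - y)) ((1 - y) / (x - y)) -
      cond c4 (x * (1 - y) / (x - y)) ((1 - y) / (x - y)) =
    ((x - 1) * (1 - y) / (x - y) ^ 2) * pS x y c1 c2 c4 := by
  obtain ⟨-, -, -, -, e4, e5, -⟩ := bv_vals x y
  cases c1 <;> cases c2 <;> cases c4 <;> simp only [cond_true, cond_false, pS, e4, e5] <;>
    field_simp <;> ring

lemma id_T (x y : F) (hD : x - y ≠ 0) (c1 c2 c3 c4 : Bool) :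
    pS x y c1 c2 c4 - (1 - cond c1 (x * (1 - y) / (x - y)) ((1 - y) / (x - y))) * pP x y c2 c3 c4 =
    pT x y c1 c3 c4 / (x - y) := by
  obtain ⟨-, -, e2, e3, e4, e5, e6, e7, e8, -, -, e11, -, -, e14⟩ := bv_vals x y
  cases c1 <;> cases c2 <;> cases c3 <;> cases c4 <;>
    simp only [cond_true, cond_false, pS, pP, pT, e2, e3, e4, e5, e6, e7, e8, e11, e14] <;>
    field_simp <;> ring

lemma id_U (x y : F) (hD : x - y ≠ 0) (c1 c2 c3 c4 : Bool) :
    pP x y c2 c3 c4 - cond c3 (x * (1 - y) / (x - y)) ((1 - y) / (x - y)) * pS x y c1 c2 c4 =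
    pU x y c1 c2 c3 / (x - y) := by
  obtain ⟨-, -, -, e3, e4, e5, e6, -, -, e9, e10, -, e12, e13, -⟩ := bv_vals x y
  cases c1 <;> cases c2 <;> cases c3 <;> cases c4 <;>
    simp only [cond_true, cond_false, pS, pP, pU, e3, e4, e5, e6, e9, e10, e12, e13] <;>
    field_simp <;> ring

end alg
end Quasi

section Good

def bP (g1 g4 : Bool) : Bool → Bool → Bool → Bool
  | true, false, false => g1
  | false, true, true => g4
  | _, _, _ => true

def bS (g3 g2 : Bool) : Bool → Bool → Bool → Bool
  | true, true, false => g3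
  | false, false, true => g2
  | _, _, _ => true

def bT (n k1 h1 h3 k4 : Bool) : Bool → Bool → Bool → Bool
  | true, true, false => k1
  | true, false, false => h1
  | false, true, true => h3
  | false, false, true => k4
  | _, _, _ => n

def bU (e h2 k2 k3 h4 : Bool) : Bool → Bool → Bool → Bool
  | true, true, false => h2
  | true, false, true => k2
  | false, true, false => k3
  | false, false, true => h4
  | _, _, _ => e

/-- no pattern is realised -/
def GoodB (e n g1 g2 g3 g4 h1 h2 h3 h4 k1 k2 k3 k4 : Bool) : Prop :=
  ∀ β c1 c2 c3 c4 : Bool, ¬ (c1 = !(β == bP g1 g4 c2 c3 c4) ∧ c3 = (β == bS g3 g2 c1 c2 c4) ∧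
    c2 = (β == bT n k1 h1 h3 k4 c1 c3 c4) ∧ c4 = !(β == bU e h2 k2 k3 h4 c1 c2 c3))

def Grp (e n g s h h' k k' : Bool) : Bool :=
  !(!e && !s && !k) && !(!e && h) && !(!n && h') && !(!n && !g && !k') &&
    !((g == s) && (h == h') && (h == !g))

lemma goodB_iff (e n g1 g2 g3 g4 h1 h2 h3 h4 k1 k2 k3 k4 : Bool) :
    GoodB e n g1 g2 g3 g4 h1 h2 h3 h4 k1 k2 k3 k4 ↔
      (!(e && n) && (Grp e n g1 g3 h1 h2 k1 k3 && Grp e n g4 g2 h3 h4 k4 k2)) = true := by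
  unfold GoodB Grp
  simp only [Bool.forall_bool, bP, bS, bT, bU]
  cases e <;> cases n <;> simp <;> grind


lemma grp_ft (g s h h' k k' : Bool) : (if Grp false true g s h h' k k' = true then (1 : ℝ) else 0) =
    (1 + -1 * sgn h) / 2 * Afun (sgn s) (sgn k) (sgn g) (sgn h') := by
  cases g <;> cases s <;> cases h <;> cases h' <;> cases k <;> cases k' <;>
    norm_num [Grp, sgn, Afun]

lemma grp_tf (g s h h' k k' : Bool) : (if Grp true false g s h h' k k' = true then (1 : ℝ) else 0) =
    (1 + -1 * sgn h') / 2 * Afun (sgn g) (sgn k') (sgn s) (sgn h) := by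
  cases g <;> cases s <;> cases h <;> cases h' <;> cases k <;> cases k' <;>
    norm_num [Grp, sgn, Afun]

lemma grp_ff (g s h h' k k' : Bool) :
    (if Grp false false g s h h' k k' = true then (1 : ℝ) else 0) =
    (1 + -1 * sgn h) / 2 * ((1 + -1 * sgn h') / 2) * Bfun (sgn g) (sgn s) (sgn k) (sgn k') := by
  cases g <;> cases s <;> cases h <;> cases h' <;> cases k <;> cases k' <;>
    norm_num [Grp, sgn, Bfun]

lemma ite_and_mul (a b : Bool) : (if (a && b) = true then (1 : ℝ) else 0) =
    (if a = true then 1 else 0) * (if b = true then 1 else 0) := by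
  cases a <;> cases b <;> simp

lemma Phi_goodB (ε : ℝ) (t : Fin 15 → ℝ) (e n g1 g2 g3 g4 h1 h2 h3 h4 k1 k2 k3 k4 : Bool)
    (t0 : t 0 = 1) (t1 : ε * t 1 = sgn e) (t2 : t 2 = sgn n) (t3 : t 3 = sgn g1)
    (t4 : t 4 = sgn g2) (t5 : t 5 = sgn g3) (t6 : t 6 = sgn g4) (t7 : t 7 = sgn h1)
    (t8 : t 8 = sgn h3) (t9 : t 9 = sgn h2) (t10 : t 10 = sgn h4) (t11 : t 11 = sgn k1)
    (t12 : t 12 = sgn k2) (t13 : t 13 = sgn k3) (t14 : t 14 = sgn k4) :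
    (if GoodB e n g1 g2 g3 g4 h1 h2 h3 h4 k1 k2 k3 k4 then (1 : ℝ) else 0) = Phi ε t := by
  simp only [goodB_iff]
  rw [ite_and_mul, ite_and_mul]
  unfold Phi
  rw [neg_mul ε, t0, t1, t2, t3, t4, t5, t6, t7, t8, t9, t10, t11, t12, t13, t14]
  cases e <;> cases n
  · rw [grp_ff, grp_ff]; simp only [sgn, cond_true, cond_false]; norm_num; ring
  · rw [grp_ft, grp_ft]; simp only [sgn, cond_true, cond_false]; norm_num; ring
  · rw [grp_tf, grp_tf]; simp only [sgn, cond_true, cond_false]; norm_num; ring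
  · norm_num [sgn]

variable {F : Type*} [Field F] [Fintype F]

lemma sqb_sq (x : F) (h : IsSquare x) : sqb x = true := by simpa [sqb] using h

lemma maxNA_goodB (h3 : Fintype.card F % 4 = 3) (x y : F) (hx : IsSquare x) (hy : IsSquare y)
    (hx0 : x ≠ 0) (hx1 : x - 1 ≠ 0) (hg : ∀ i, bv x y i ≠ 0) :
    MaxNA (x * (1 - y) / (x - y)) ((1 - y) / (x - y)) ↔
    GoodB (sqb ((x - 1) * (x - y))) (sqb (bv x y 2 * (x - y))) (sqb (bv x y 3)) (sqb (bv x y 4))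
      (sqb (bv x y 5)) (sqb (bv x y 6)) (sqb (bv x y 7 * (x - y))) (sqb (bv x y 9 * (x - y)))
      (sqb (bv x y 8 * (x - y))) (sqb (bv x y 10 * (x - y))) (sqb (bv x y 11 * (x - y)))
      (sqb (bv x y 12 * (x - y))) (sqb (bv x y 13 * (x - y))) (sqb (bv x y 14 * (x - y))) := by
  have bvs := bv_vals x y
  have hy0 : y ≠ 0 := by have := hg 0; rwa [bvs.1] at this
  have hD : x - y ≠ 0 := by have := hg 1; rwa [bvs.2.1] at this
  have hn : 1 - y ≠ 0 := by have := hg 2; rwa [bvs.2.2.1] at this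
  have sx := sqb_sq x hx
  have sy := sqb_sq y hy
  have s1 : sqb (1 : F) = true := sqb_sq 1 (by simp)
  have tt : ∀ b : Bool, (true == b) = b := by decide
  have nP : ∀ c2 c3 c4, pP x y c2 c3 c4 ≠ 0 := by
    intro c2 c3 c4
    cases c2 <;> cases c3 <;> cases c4 <;> simp [pP, hx0, hy0, hg]
  have nS : ∀ c2 c3 c4, pS x y c2 c3 c4 ≠ 0 := by
    intro c2 c3 c4
    cases c2 <;> cases c3 <;> cases c4 <;> simp [pS, hx0, hy0, hg]
  have nT : ∀ c2 c3 c4, pT x y c2 c3 c4 ≠ 0 := by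
    intro c2 c3 c4
    cases c2 <;> cases c3 <;> cases c4 <;> simp [pT, hx0, hy0, hg]
  have nU : ∀ c2 c3 c4, pU x y c2 c3 c4 ≠ 0 := by
    intro c2 c3 c4
    cases c2 <;> cases c3 <;> cases c4 <;> simp [pU, hx0, hy0, hg, hx1]
  have eP : ∀ c2 c3 c4, sqb (pP x y c2 c3 c4) = bP (sqb (bv x y 3)) (sqb (bv x y 6)) c2 c3 c4 := by
    intro c2 c3 c4
    cases c2 <;> cases c3 <;> cases c4 <;>
      simp only [pP, bP, sqb_mul, sx, sy, s1, tt, hx0, hy0, ne_eq, not_false_eq_true]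
  have eS : ∀ c2 c3 c4, sqb (pS x y c2 c3 c4) = bS (sqb (bv x y 5)) (sqb (bv x y 4)) c2 c3 c4 := by
    intro c2 c3 c4
    cases c2 <;> cases c3 <;> cases c4 <;>
      simp only [pS, bS, sqb_mul, sx, sy, s1, tt, hx0, hy0, ne_eq, not_false_eq_true]
  have eT : ∀ c2 c3 c4, sqb (pT x y c2 c3 c4 / (x - y)) = bT (sqb (bv x y 2 * (x - y)))
      (sqb (bv x y 11 * (x - y))) (sqb (bv x y 7 * (x - y))) (sqb (bv x y 8 * (x - y)))
      (sqb (bv x y 14 * (x - y))) c2 c3 c4 := by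
    intro c2 c3 c4
    cases c2 <;> cases c3 <;> cases c4 <;>
      simp only [pT, bT, div_eq_mul_inv, sqb_mul, sqb_inv, sx, sy, s1, tt, hx0, hy0, hg, hD, ne_eq,
        not_false_eq_true, mul_eq_zero, inv_eq_zero, or_self]
  have eU : ∀ c2 c3 c4, sqb (pU x y c2 c3 c4 / (x - y)) = bU (sqb ((x - 1) * (x - y)))
      (sqb (bv x y 9 * (x - y))) (sqb (bv x y 12 * (x - y))) (sqb (bv x y 13 * (x - y)))
      (sqb (bv x y 10 * (x - y))) c2 c3 c4 := by
    intro c2 c3 c4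
    cases c2 <;> cases c3 <;> cases c4 <;>
      simp only [pU, bU, div_eq_mul_inv, sqb_mul, sqb_inv, sx, sy, s1, tt, hx0, hy0, hg, hD, hx1,
        ne_eq, not_false_eq_true, mul_eq_zero, inv_eq_zero, or_self]
  rw [maxNA_iff]
  set a := x * (1 - y) / (x - y) with ha
  set b := (1 - y) / (x - y) with hb
  set M := (x - 1) * (1 - y) / (x - y) ^ 2 with hM
  have hM0 : M ≠ 0 := div_ne_zero (mul_ne_zero hx1 hn) (pow_ne_zero 2 hD)
  -- the key equivalence for signs, for a scaling parameter `t`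
  have key : ∀ (t : F), t ≠ 0 → ∀ c1 c2 c3 c4,
      sqb (-t * pP x y c2 c3 c4) = !(sqb t == sqb (pP x y c2 c3 c4)) ∧
      sqb (t * pS x y c1 c2 c4) = (sqb t == sqb (pS x y c1 c2 c4)) ∧
      sqb (t * (pT x y c1 c3 c4 / (x - y))) = (sqb t == sqb (pT x y c1 c3 c4 / (x - y))) ∧
      sqb (-t * (pU x y c1 c2 c3 / (x - y))) = !(sqb t == sqb (pU x y c1 c2 c3 / (x - y))) := by
    intro t ht c1 c2 c3 c4
    refine ⟨?_, sqb_mul _ _ ht (nS _ _ _), sqb_mul _ _ ht (div_ne_zero (nT _ _ _) hD), ?_⟩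
    · rw [neg_mul, sqb_neg h3 _ (mul_ne_zero ht (nP _ _ _)), sqb_mul _ _ ht (nP _ _ _)]
    · rw [neg_mul, sqb_neg h3 _ (mul_ne_zero ht (div_ne_zero (nU _ _ _) hD)),
        sqb_mul _ _ ht (div_ne_zero (nU _ _ _) hD)]
  constructor
  · intro h β c1 c2 c3 c4 hc
    obtain ⟨hc1, hc3, hc2, hc4⟩ := hc
    obtain ⟨t, ht, htβ⟩ : ∃ t : F, t ≠ 0 ∧ sqb t = β := by
      cases β
      · exact ⟨-1, by simp, sqb_neg_one h3⟩
      · exact ⟨1, one_ne_zero, s1⟩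
    obtain ⟨k1, k2, k3, k4⟩ := key t ht c1 c2 c3 c4
    rw [eP, htβ, ← hc1] at k1
    rw [eS, htβ, ← hc3] at k2
    rw [eT, htβ, ← hc2] at k3
    rw [eU, htβ, ← hc4] at k4
    have iP := id_P x y hD c2 c3 c4
    have iS := id_S x y hD c1 c2 c4
    have iT := id_T x y hD c1 c2 c3 c4
    have iU := id_U x y hD c1 c2 c3 c4
    rw [← ha, ← hb] at iP iS iT iU
    rw [← hM] at iP iS
    have := h (-t * pP x y c2 c3 c4) (-t * pP x y c2 c3 c4 + t * pS x y c1 c2 c4) (by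
      unfold Assoc0
      rw [k1, add_sub_cancel_left, k2,
        show -t * pP x y c2 c3 c4 + t * pS x y c1 c2 c4 - (cond c1 a b) * (-t * pP x y c2 c3 c4) =
          t * (pT x y c1 c3 c4 / (x - y)) by rw [← iT]; ring, k3,
        show -t * pP x y c2 c3 c4 + (cond c3 a b) * (t * pS x y c1 c2 c4) =
          -t * (pU x y c1 c2 c3 / (x - y)) by rw [← iU]; ring, k4, ← iT, ← iU]
      linear_combination (-t * pP x y c2 c3 c4) * iS - t * pS x y c1 c2 c4 * iP)
    exact mul_ne_zero (neg_ne_zero.2 ht) (nP _ _ _) this.1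
  · intro h v w hvw
    unfold Assoc0 at hvw
    by_contra hne
    generalize e1 : sqb v = c1 at hvw
    generalize e2 : sqb (w - cond c1 a b * v) = c2 at hvw
    generalize e3 : sqb (w - v) = c3 at hvw
    generalize e4 : sqb (v + cond c3 a b * (w - v)) = c4 at hvw
    have iP := id_P x y hD c2 c3 c4
    have iS := id_S x y hD c1 c2 c4
    have iT := id_T x y hD c1 c2 c3 c4
    have iU := id_U x y hD c1 c2 c3 c4
    rw [← ha, ← hb] at iP iS iT iU
    rw [← hM] at iP iS
    have h1 : M * (v * pS x y c1 c2 c4 + (w - v) * pP x y c2 c3 c4) = 0 := by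
      linear_combination hvw - v * iS + (w - v) * iP
    have h2 := (mul_eq_zero.1 h1).resolve_left hM0
    have hS0 := nS c1 c2 c4
    obtain ⟨t, htdef⟩ : ∃ t, w - v = t * pS x y c1 c2 c4 :=
      ⟨(w - v) / pS x y c1 c2 c4, by field_simp⟩
    have hv : v = -t * pP x y c2 c3 c4 := by
      apply mul_right_cancel₀ hS0
      linear_combination h2 - htdef * pP x y c2 c3 c4
    have ht : t ≠ 0 := by
      rintro rfl
      apply hne
      have hv0 : v = 0 := by rw [hv]; ring
      refine ⟨hv0, ?_⟩
      have : w = v + (w - v) := by ring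
      rw [this, htdef, hv0]; ring
    obtain ⟨k1, k2, k3, k4⟩ := key t ht c1 c2 c3 c4
    have hw : w - cond c1 a b * v = t * (pT x y c1 c3 c4 / (x - y)) := by
      rw [← iT]; linear_combination htdef + (1 - cond c1 a b) * hv
    have hz : v + cond c3 a b * (w - v) = -t * (pU x y c1 c2 c3 / (x - y)) := by
      rw [← iU]; linear_combination hv + cond c3 a b * htdef
    rw [← hv, e1, eP] at k1
    rw [← htdef, e3, eS] at k2
    rw [← hw, e2, eT] at k3
    rw [← hz, e4, eU] at k4
    exact h (sqb t) c1 c2 c3 c4 ⟨k1, k2, k3, k4⟩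

/-- The indicator of maximal nonassociativity for generic parameters. -/
theorem maxNA_Phi (h3 : Fintype.card F % 4 = 3) (x y : F) (hx : IsSquare x) (hy : IsSquare y)
    (hx0 : x ≠ 0) (hx1 : x - 1 ≠ 0) (hg : ∀ i, bv x y i ≠ 0) :
    (if MaxNA (x * (1 - y) / (x - y)) ((1 - y) / (x - y)) then (1 : ℝ) else 0) =
      Phi (chr (x - 1)) (sg x y) := by
  have bvs := bv_vals x y
  have hD : x - y ≠ 0 := by have := hg 1; rwa [bvs.2.1] at this
  simp only [maxNA_goodB h3 x y hx hy hx0 hx1 hg]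
  have u1 : ∀ i, tw i = false → sg x y i = sgn (sqb (bv x y i)) := by
    intro i hi
    rw [← chr_eq _ (hg i), sg, gq, hi]; simp [eval_gp]
  have u2 : ∀ i, tw i = true → sg x y i = sgn (sqb (bv x y i * (x - y))) := by
    intro i hi
    rw [← chr_eq _ (mul_ne_zero (hg i) hD), sg, gq, hi]; simp [eval_gp, bvs.2.1]
  apply Phi_goodB
  · rw [u1 0 (by decide), bvs.1, sqb_sq y hy]; rfl
  · rw [u1 1 (by decide), bvs.2.1, ← chr_eq _ hD, ← chr_mul, chr_eq _ (mul_ne_zero hx1 hD)]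
  · exact u2 2 (by decide)
  · exact u1 3 (by decide)
  · exact u1 4 (by decide)
  · exact u1 5 (by decide)
  · exact u1 6 (by decide)
  all_goals exact u2 _ (by decide)

end Good

section Final
variable {F : Type*} [Field F] [Fintype F]

lemma abs_mul_le_of {a b A B : ℝ} (ha : |a| ≤ A) (hb : |b| ≤ B) : |a * b| ≤ A * B := by
  rw [abs_mul]; exact mul_le_mul ha hb (abs_nonneg _) ((abs_nonneg _).trans ha)

lemma abs_half {e t : ℝ} (he : |e| ≤ 1) (ht : |t| ≤ 1) : |(1 + e * t) / 2| ≤ 1 := by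
  have h := abs_le.1 (abs_mul_le_of he ht)
  rw [abs_le]; constructor <;> linarith [h.1, h.2]

lemma Afun_bd {s k g h : ℝ} (hs : |s| ≤ 1) (hk : |k| ≤ 1) (hg : |g| ≤ 1) (hh : |h| ≤ 1) :
    |Afun s k g h| ≤ 2 := by
  have h1 := abs_le.1 (abs_mul_le_of hs hk)
  have h2 := abs_le.1 (abs_mul_le_of hg hh)
  have h3 := abs_le.1 (abs_mul_le_of hs hg)
  have h4 := abs_le.1 (abs_mul_le_of hs hh)
  have h5 := abs_le.1 (abs_mul_le_of (abs_mul_le_of hs hg) hh)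
  rw [abs_le] at *
  unfold Afun
  constructor <;> linarith [h1.1, h1.2, h2.1, h2.2, h3.1, h3.2, h4.1, h4.2, h5.1, h5.2,
    hs.1, hs.2, hk.1, hk.2, hg.1, hg.2, hh.1, hh.2]

lemma Bfun_bd {g s k l : ℝ} (hg : |g| ≤ 1) (hs : |s| ≤ 1) (hk : |k| ≤ 1) (hl : |l| ≤ 1) :
    |Bfun g s k l| ≤ 3 := by
  have p : ∀ {t : ℝ}, |t| ≤ 1 → |1 + t| ≤ 2 := fun {t} ht => by
    rw [abs_le] at *; constructor <;> linarith [ht.1, ht.2]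
  have m : ∀ {t : ℝ}, |t| ≤ 1 → |1 - t| ≤ 2 := fun {t} ht => by
    rw [abs_le] at *; constructor <;> linarith [ht.1, ht.2]
  have a1 := abs_le.1 (abs_mul_le_of (abs_mul_le_of (p hg) (m hs)) (p hk))
  have a2 := abs_le.1 (abs_mul_le_of (abs_mul_le_of (m hg) (p hs)) (p hl))
  have a3 := abs_le.1 (abs_mul_le_of (abs_mul_le_of (abs_mul_le_of (m hg) (m hs)) (p hk)) (p hl))
  unfold Bfun
  rw [abs_le]
  constructor <;> linarith [a1.1, a1.2, a2.1, a2.2, a3.1, a3.2]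

lemma Phi_bd (ε : ℝ) (he : |ε| ≤ 1) (t : Fin 15 → ℝ) (ht : ∀ i, |t i| ≤ 1) : |Phi ε t| ≤ 17 := by
  have he' : |-ε| ≤ 1 := by rwa [abs_neg]
  have h1 : |(1 : ℝ)| ≤ 1 := by norm_num
  have h1' : |(-1 : ℝ)| ≤ 1 := by norm_num
  have H := fun {e : ℝ} (he : |e| ≤ 1) i => abs_half he (ht i)
  have E1 := abs_mul_le_of (abs_mul_le_of (abs_mul_le_of (abs_mul_le_of (abs_mul_le_of
    (H he' 1) (H h1 2)) (H h1' 7)) (H h1' 8)) (Afun_bd (ht 5) (ht 11) (ht 3) (ht 9)))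
    (Afun_bd (ht 4) (ht 14) (ht 6) (ht 10))
  have E2 := abs_mul_le_of (abs_mul_le_of (abs_mul_le_of (abs_mul_le_of (abs_mul_le_of
    (H he 1) (H h1' 2)) (H h1' 9)) (H h1' 10)) (Afun_bd (ht 3) (ht 13) (ht 5) (ht 7)))
    (Afun_bd (ht 6) (ht 12) (ht 4) (ht 8))
  have E3 := abs_mul_le_of (abs_mul_le_of (abs_mul_le_of (abs_mul_le_of (abs_mul_le_of
    (abs_mul_le_of (abs_mul_le_of
    (H he' 1) (H h1' 2)) (H h1' 7)) (H h1' 8)) (H h1' 9)) (H h1' 10))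
    (Bfun_bd (ht 3) (ht 5) (ht 11) (ht 13))) (Bfun_bd (ht 6) (ht 4) (ht 14) (ht 12))
  have := abs_mul_le_of (H h1 0) ((abs_add_le _ _).trans
    (add_le_add ((abs_add_le _ _).trans (add_le_add E1 E2)) E3))
  unfold Phi
  refine this.trans (by norm_num)

lemma chr_bd (z : F) : |chr z| ≤ 1 := by
  by_cases hz : z = 0
  · subst hz; simp [chr]
  · rw [chr_eq z hz]; cases sqb z <;> simp [sgn]

lemma two_ne (hodd : Fintype.card F % 2 = 1) : (2 : F) ≠ 0 := by
  apply Ring.two_ne_zero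
  intro h
  have := FiniteField.even_card_of_char_two h
  omega

/-- few bad `y` for a generic `x` -/
lemma card_bad (hodd : Fintype.card F % 2 = 1) (x : F) (h : Gen x) :
    (Finset.univ.filter fun y : F => ¬ ∀ i, bv x y i ≠ 0).card ≤ 30 := by
  have hsub : (Finset.univ.filter fun y : F => ¬ ∀ i, bv x y i ≠ 0) ⊆
      Finset.univ.biUnion fun i : Fin 15 => (gp x i).roots.toFinset := by
    intro y hy
    simp only [Finset.mem_filter, Finset.mem_univ, true_and, not_forall, not_not] at hy
    obtain ⟨i, hi⟩ := hy
    simp only [Finset.mem_biUnion, Finset.mem_univ, true_and, Multiset.mem_toFinset]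
    refine ⟨i, (Polynomial.mem_roots ?_).2 ?_⟩
    · intro h0
      apply disc_ne x (two_ne hodd) h i
      have c2 : qa x i = 0 := by
        have := congrArg (fun p => Polynomial.coeff p 2) h0
        simpa [gp, Polynomial.coeff_X, Polynomial.coeff_C] using this
      have c1 : qb x i = 0 := by
        have := congrArg (fun p => Polynomial.coeff p 1) h0
        simpa [gp, Polynomial.coeff_X, Polynomial.coeff_C] using this
      simp [disc, c1, c2]
    · rw [Polynomial.IsRoot, eval_gp, hi]
  refine (Finset.card_le_card hsub).trans (Finset.card_biUnion_le.trans ?_)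
  calc ∑ i : Fin 15, (gp x i).roots.toFinset.card ≤ ∑ i : Fin 15, 2 :=
        Finset.sum_le_sum fun i _ => (Multiset.toFinset_card_le _).trans
          ((Polynomial.card_roots' _).trans (natDegree_gp x i))
    _ = 30 := by simp

/-- indicator of a good second parameter -/
def ind (x y : F) : ℝ :=
  if y ≠ 0 ∧ y ≠ 1 ∧ y ≠ x ∧ IsSquare y ∧ MaxNA (x * (1 - y) / (x - y)) ((1 - y) / (x - y))
  then 1 else 0

lemma ind_nonneg (x y : F) : 0 ≤ ind x y := by unfold ind; split_ifs <;> norm_num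
lemma ind_le (x y : F) : ind x y ≤ 1 := by unfold ind; split_ifs <;> norm_num

lemma ind_eq (h3 : Fintype.card F % 4 = 3) (x y : F) (hx : IsSquare x)
    (hx0 : x ≠ 0) (hx1 : x - 1 ≠ 0) (hg : ∀ i, bv x y i ≠ 0) :
    ind x y = Phi (chr (x - 1)) (sg x y) := by
  have bvs := bv_vals x y
  have y0 : y ≠ 0 := by have := hg 0; rwa [bvs.1] at this
  have yx : y ≠ x := by
    rintro rfl; have := hg 1; rw [bvs.2.1] at this; simp at this
  have y1 : y ≠ 1 := by
    rintro rfl; have := hg 2; rw [bvs.2.2.1] at this; simp at this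
  by_cases hy : IsSquare y
  · rw [← maxNA_Phi h3 x y hx hy hx0 hx1 hg]
    simp [ind, y0, y1, yx, hy]
  · have : sg x y 0 = -1 := by
      have : sg x y 0 = chr y := by
        simp [sg, gq, tw, eval_gp, bvs.1]
      rw [this, chr_eq y y0]; simp [sqb, hy, sgn]
    unfold Phi
    rw [this]
    simp [ind, hy]

lemma generic_x (h3 : Fintype.card F % 4 = 3) (hbig : 19044 ≤ Fintype.card F) (x : F)
    (hx : IsSquare x) (hx0 : x ≠ 0) (hx1 : x ≠ 1) (h : Gen x) :
    |∑ y, ind x y - 825 / 32768 * Fintype.card F| ≤ 265 * Real.sqrt (Fintype.card F) + 540 := by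
  have hx1' : x - 1 ≠ 0 := sub_ne_zero.2 hx1
  have hodd : Fintype.card F % 2 = 1 := by omega
  have he : |chr (x - 1)| = 1 := by
    rw [chr_eq _ hx1']; cases sqb (x - 1) <;> simp [sgn]
  have h1 := Phi_sum x hodd h hbig _ he
  have h2 : |∑ y, ind x y - ∑ y, Phi (chr (x - 1)) (sg x y)| ≤ 540 := by
    rw [← Finset.sum_sub_distrib]
    refine (Finset.abs_sum_le_sum_abs _ _).trans ?_
    calc ∑ y, |ind x y - Phi (chr (x - 1)) (sg x y)|
        ≤ ∑ y, (if ¬ ∀ i, bv x y i ≠ 0 then (18 : ℝ) else 0) := by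
          refine Finset.sum_le_sum fun y _ => ?_
          split_ifs with hb
          · rw [ind_eq h3 x y hx hx0 hx1' hb]; simp
          · have := abs_le.1 (Phi_bd _ he.le (sg x y) fun i => chr_bd _)
            rw [abs_le]
            constructor <;> linarith [this.1, this.2, ind_nonneg x y, ind_le x y]
      _ = (Finset.univ.filter fun y : F => ¬ ∀ i, bv x y i ≠ 0).card * 18 := by
          rw [← Finset.sum_filter, Finset.sum_const, nsmul_eq_mul]
      _ ≤ 30 * 18 := by
          have := card_bad hodd x h
          have : ((Finset.univ.filter fun y : F => ¬ ∀ i, bv x y i ≠ 0).card : ℝ) ≤ 30 := by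
            exact_mod_cast this
          linarith
      _ = 540 := by norm_num
  have := abs_add_le (∑ y, ind x y - ∑ y, Phi (chr (x - 1)) (sg x y))
    (∑ y, Phi (chr (x - 1)) (sg x y) - 825 / 32768 * Fintype.card F)
  rw [sub_add_sub_cancel] at this
  linarith

/-- admissible first parameters -/
def SX (F : Type*) [Field F] [Fintype F] : Finset F :=
  Finset.univ.filter fun x => x ≠ 0 ∧ x ≠ 1 ∧ IsSquare x

lemma card_SX (hodd : Fintype.card F % 2 = 1) :
    ((SX F).card : ℝ) = (Fintype.card F : ℝ) / 2 - 3 / 2 := by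
  have h0 : ∑ x : F, chr x = 0 := by
    have := quadraticChar_sum_zero (F := F) (by
      intro h; have := FiniteField.even_card_of_char_two h; omega)
    unfold chr; exact_mod_cast this
  have h1 : ∀ x : F, (if x ≠ 0 ∧ x ≠ 1 ∧ IsSquare x then (1 : ℝ) else 0) =
      1 / 2 + chr x / 2 - (if x = 0 then 1 / 2 else 0) - (if x = 1 then 1 else 0) := by
    intro x
    by_cases hx : x = 0
    · subst hx; simp [chr]
    by_cases hx1 : x = 1
    · subst hx1; simp [chr]; norm_num
    rw [chr_eq x hx]
    by_cases hs : IsSquare x <;> simp [hx, hx1, hs, sqb, sgn] <;> norm_num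
  unfold SX
  rw [Finset.card_filter]
  push_cast
  rw [Finset.sum_congr rfl fun x _ => h1 x]
  simp only [Finset.sum_sub_distrib, Finset.sum_add_distrib, ← Finset.sum_div, h0]
  simp
  ring

lemma sigma_eq : (sigmaCount F : ℝ) = ∑ x ∈ SX F, ∑ y, ind x y := by
  have e : ∑ x ∈ SX F, ∑ y, ind x y = (((SX F) ×ˢ (Finset.univ : Finset F)).filter fun p =>
      p.2 ≠ 0 ∧ p.2 ≠ 1 ∧ p.2 ≠ p.1 ∧ IsSquare p.2 ∧
      MaxNA (p.1 * (1 - p.2) / (p.1 - p.2)) ((1 - p.2) / (p.1 - p.2))).card := by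
    rw [Finset.card_filter, Finset.sum_product]
    push_cast
    rfl
  rw [e]
  norm_cast
  unfold sigmaCount
  rw [Set.ncard_eq_toFinset_card']
  symm
  refine Finset.card_bij' (fun p _ => (p.1 * (1 - p.2) / (p.1 - p.2), (1 - p.2) / (p.1 - p.2)))
    (fun p _ => (p.1 / p.2, (1 - p.1) / (1 - p.2))) ?_ ?_ ?_ ?_
  · rintro ⟨x, y⟩ hp
    simp only [SX, Finset.mem_filter, Finset.mem_product, Finset.mem_univ, true_and, and_true] at hp
    obtain ⟨⟨hx0, hx1, hx⟩, hy0, hy1, hyx, hy, hm⟩ := hp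
    have hD : x - y ≠ 0 := sub_ne_zero.2 (Ne.symm hyx)
    have hy1' : 1 - y ≠ 0 := sub_ne_zero.2 (Ne.symm hy1)
    have hx1' : x - 1 ≠ 0 := sub_ne_zero.2 hx1
    have e1 : 1 - x * (1 - y) / (x - y) = y * (x - 1) / (x - y) := by field_simp; ring
    have e2 : 1 - (1 - y) / (x - y) = (x - 1) / (x - y) := by field_simp; ring
    rw [Set.mem_toFinset]
    simp only [Set.mem_ofPred_eq, SigSet]
    refine ⟨⟨?_, ?_, ?_, ?_, ?_, ?_, ?_⟩, hm⟩
    · rw [← sub_ne_zero]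
      have : x * (1 - y) / (x - y) - (1 - y) / (x - y) = (x - 1) * (1 - y) / (x - y) := by ring
      rw [this]; positivity
    · positivity
    · rw [ne_comm, ← sub_ne_zero, e1]; positivity
    · positivity
    · rw [ne_comm, ← sub_ne_zero, e2]; positivity
    · have : x * (1 - y) / (x - y) * ((1 - y) / (x - y)) =
        x * (((1 - y) / (x - y)) * ((1 - y) / (x - y))) := by ring
      rw [this]; exact hx.mul ⟨_, rfl⟩
    · rw [e1, e2]
      have : y * (x - 1) / (x - y) * ((x - 1) / (x - y)) =
        y * (((x - 1) / (x - y)) * ((x - 1) / (x - y))) := by ring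
      rw [this]; exact hy.mul ⟨_, rfl⟩
  · rintro ⟨a, b⟩ hp
    rw [Set.mem_toFinset] at hp
    simp only [Set.mem_ofPred_eq, SigSet] at hp
    obtain ⟨⟨hab, ha0, ha1, hb0, hb1, h1, h2⟩, hm⟩ := hp
    have hb1' : 1 - b ≠ 0 := sub_ne_zero.2 hb1.symm
    have ha1' : 1 - a ≠ 0 := sub_ne_zero.2 ha1.symm
    have hab' : a - b ≠ 0 := sub_ne_zero.2 hab
    have d : a / b - (1 - a) / (1 - b) = (a - b) / (b * (1 - b)) := by field_simp; ring
    have ea : a / b * (1 - (1 - a) / (1 - b)) / (a / b - (1 - a) / (1 - b)) = a := by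
      rw [d]; field_simp; ring
    have eb : (1 - (1 - a) / (1 - b)) / (a / b - (1 - a) / (1 - b)) = b := by
      rw [d]; field_simp; ring
    simp only [SX, Finset.mem_filter, Finset.mem_product, Finset.mem_univ, true_and, and_true]
    rw [ea, eb]
    refine ⟨⟨div_ne_zero ha0 hb0, ?_, ?_⟩, div_ne_zero ha1' hb1', ?_, ?_, ?_, hm⟩
    · rw [ne_eq, div_eq_one_iff_eq hb0]; exact hab
    · have : a / b = a * b / (b * b) := by field_simp
      rw [this]; exact h1.div ⟨_, rfl⟩
    · rw [div_eq_one_iff_eq hb1']; intro h; apply hab; linear_combination -h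
    · refine Ne.symm ?_
      rw [← sub_ne_zero, d]; positivity
    · have : (1 - a) / (1 - b) = (1 - a) * (1 - b) / ((1 - b) * (1 - b)) := by field_simp
      rw [this]; exact h2.div ⟨_, rfl⟩
  · rintro ⟨x, y⟩ hp
    simp only [SX, Finset.mem_filter, Finset.mem_product, Finset.mem_univ, true_and, and_true] at hp
    obtain ⟨⟨hx0, hx1, hx⟩, hy0, hy1, hyx, hy, hm⟩ := hp
    have hD : x - y ≠ 0 := sub_ne_zero.2 (Ne.symm hyx)
    have hy1' : 1 - y ≠ 0 := sub_ne_zero.2 (Ne.symm hy1)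
    have hx1' : x - 1 ≠ 0 := sub_ne_zero.2 hx1
    have e1 : 1 - x * (1 - y) / (x - y) = y * (x - 1) / (x - y) := by field_simp; ring
    have e2 : 1 - (1 - y) / (x - y) = (x - 1) / (x - y) := by field_simp; ring
    simp only [e1, e2, Prod.mk.injEq]
    constructor <;> field_simp
  · rintro ⟨a, b⟩ hp
    rw [Set.mem_toFinset] at hp
    simp only [Set.mem_ofPred_eq, SigSet] at hp
    obtain ⟨⟨hab, ha0, ha1, hb0, hb1, h1, h2⟩, hm⟩ := hp
    have hb1' : 1 - b ≠ 0 := sub_ne_zero.2 hb1.symm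
    have hab' : a - b ≠ 0 := sub_ne_zero.2 hab
    have d : a / b - (1 - a) / (1 - b) = (a - b) / (b * (1 - b)) := by field_simp; ring
    simp only [d, Prod.mk.injEq]
    constructor <;> · field_simp; ring

lemma main_big (h3 : Fintype.card F % 4 = 3) (hbig : 19044 ≤ Fintype.card F) :
    |(sigmaCount F : ℝ) - 825 / 65536 * (Fintype.card F : ℝ) ^ 2| <
      138 * ((Fintype.card F : ℝ) * Real.sqrt (Fintype.card F)) + 235 * Fintype.card F := by
  have hodd : Fintype.card F % 2 = 1 := by omega
  set Q : ℝ := (Fintype.card F : ℝ) with hQ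
  have hQb : (19044 : ℝ) ≤ Q := by rw [hQ]; exact_mod_cast hbig
  have hs : (138 : ℝ) ≤ Real.sqrt Q := by
    apply Real.le_sqrt_of_sq_le; linarith
  have hS := card_SX (F := F) hodd
  rw [← hQ] at hS
  have h1 : |∑ x ∈ SX F, (∑ y, ind x y - 825 / 32768 * Q)| ≤
      (SX F).card * (265 * Real.sqrt Q + 540) + 87 * Q := by
    refine (Finset.abs_sum_le_sum_abs _ _).trans ?_
    calc ∑ x ∈ SX F, |∑ y, ind x y - 825 / 32768 * Q|
        ≤ ∑ x ∈ SX F, ((265 * Real.sqrt Q + 540) + if ¬ Gen x then Q else 0) := by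
          refine Finset.sum_le_sum fun x hx => ?_
          simp only [SX, Finset.mem_filter, Finset.mem_univ, true_and] at hx
          split_ifs with hg
          · rw [add_zero]; exact generic_x h3 hbig x hx.2.2 hx.1 hx.2.1 hg
          · have a1 : 0 ≤ ∑ y, ind x y := Finset.sum_nonneg fun y _ => ind_nonneg x y
            have a2 : ∑ y, ind x y ≤ Q := by
              refine (Finset.sum_le_sum fun y _ => ind_le x y).trans ?_
              simp [hQ]
            rw [abs_le]; constructor <;> linarith
      _ ≤ (SX F).card * (265 * Real.sqrt Q + 540) + 87 * Q := by
          rw [Finset.sum_add_distrib, Finset.sum_const, nsmul_eq_mul]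
          gcongr
          calc ∑ x ∈ SX F, (if ¬ Gen x then Q else 0) ≤ ∑ x : F, (if ¬ Gen x then Q else 0) :=
                Finset.sum_le_sum_of_subset_of_nonneg (Finset.subset_univ _)
                  fun x _ _ => by split_ifs <;> linarith
            _ = (Finset.univ.filter fun x : F => ¬ Gen x).card * Q := by
                rw [← Finset.sum_filter, Finset.sum_const, nsmul_eq_mul]
            _ ≤ 87 * Q := by
                have : ((Finset.univ.filter fun x : F => ¬ Gen x).card : ℝ) ≤ 87 := by
                  exact_mod_cast card_not_gen hodd
                gcongr
  rw [Finset.sum_sub_distrib, ← sigma_eq, Finset.sum_const, nsmul_eq_mul, hS] at h1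
  have h2 := abs_le.1 h1
  have h4 : 138 * Q ≤ Q * Real.sqrt Q := by nlinarith
  rw [abs_lt]
  constructor <;> nlinarith [h2.1, h2.2]

lemma main_small (hsmall : Fintype.card F < 19044) :
    |(sigmaCount F : ℝ) - 825 / 65536 * (Fintype.card F : ℝ) ^ 2| <
      138 * ((Fintype.card F : ℝ) * Real.sqrt (Fintype.card F)) + 235 * Fintype.card F := by
  have hc : sigmaCount F ≤ Fintype.card F ^ 2 := by
    unfold sigmaCount
    refine (Set.ncard_le_card _).trans ?_
    rw [Nat.card_eq_fintype_card, Fintype.card_prod, sq]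
  have hp : 0 < Fintype.card F := Fintype.card_pos
  set Q : ℝ := (Fintype.card F : ℝ) with hQ
  have hc' : (sigmaCount F : ℝ) ≤ Q ^ 2 := by rw [hQ]; exact_mod_cast hc
  have hp' : 0 < Q := by rw [hQ]; exact_mod_cast hp
  have hs : Q < 19044 := by rw [hQ]; exact_mod_cast hsmall
  have h0 : (0 : ℝ) ≤ sigmaCount F := Nat.cast_nonneg _
  have hr : Real.sqrt Q ≤ 138 := by
    rw [Real.sqrt_le_left (by norm_num)]; linarith
  have hr2 := Real.mul_self_sqrt hp'.le
  have h5 : Q ≤ 138 * Real.sqrt Q := by nlinarith [Real.sqrt_nonneg Q]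
  have h6 : Q ^ 2 ≤ 138 * (Q * Real.sqrt Q) := by nlinarith
  rw [abs_lt]
  constructor <;> nlinarith

end Final
/-- Theorem 4.6: for `q ≡ 3 (mod 4)`,
`|σ(q) - 25(2⁻¹¹ + 2⁻¹⁶)q²| < 138·q^{3/2} + 235·q`. -/
theorem sigma_estimate_three_mod_four (F : Type*) [Field F] [Fintype F]
    (q : ℕ) (hq : Fintype.card F = q) (h3 : q % 4 = 3) :
    |(sigmaCount F : ℝ) - 25 * ((2 : ℝ) ^ (-11 : ℤ) + (2 : ℝ) ^ (-16 : ℤ)) * (q : ℝ) ^ 2|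
      < 138 * (q : ℝ) ^ ((3 : ℝ) / 2) + 235 * (q : ℝ) := by
  subst hq
  have hp : (0 : ℝ) < Fintype.card F := by exact_mod_cast Fintype.card_pos (α := F)
  have e1 : 25 * ((2 : ℝ) ^ (-11 : ℤ) + (2 : ℝ) ^ (-16 : ℤ)) = 825 / 65536 := by norm_num
  have e2 : (Fintype.card F : ℝ) ^ ((3 : ℝ) / 2) =
      (Fintype.card F : ℝ) * Real.sqrt (Fintype.card F) := by
    rw [Real.sqrt_eq_rpow, ← Real.rpow_one_add' hp.le (by norm_num)]
    norm_num
  rw [e1, e2]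
  rcases lt_or_ge (Fintype.card F) 19044 with h | h
  · exact main_small h
  · exact main_big h3 h
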